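/- arXiv:1503.06434 — 2 statements merged into one kernel-verified Lean document; each statement's English description precedes it below -/
import Mathlib

section
/- Let P be a smooth Fano n-polytope with n+3 vertices. Suppose there exist integers a ≥ 2 and b ≥ 2 with n = a + 2b − 1 and a labeling V(P) = {v_1, …, v_a, y_1, …, y_b, z, t, u_1, …, u_b} of the vertices of P such that the primitive relations of P are exactly: v_1+⋯+v_a+y_1+⋯+y_b = (a+b−1)t; y_1+⋯+y_b+z = u_1+⋯+u_b; z+t = 0; t+u_1+⋯+u_b = y_1+⋯+y_b; and u_1+⋯+u_b+v_1+⋯+v_a = (a+b−2)t. Then P is I-isolated. -/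
/-! ## Basic definitions: lattice polytopes, smooth Fano polytopes,
unimodular equivalence, F- and I-equivalence, primitive collections. -/

/-- A point of `ℝ^n` all of whose coordinates are integers. -/
def IsLatticePoint {n : ℕ} (x : Fin n → ℝ) : Prop := ∀ i, ∃ m : ℤ, x i = (m : ℝ)

/-- The vertex set of a polytope: its extreme points. -/
def vertexSet {n : ℕ} (P : Set (Fin n → ℝ)) : Set (Fin n → ℝ) :=
  Set.extremePoints ℝ P

/-- A lattice `n`-polytope: the convex hull of finitely many lattice points,
of full dimension `n`. -/
def IsLatticePolytope {n : ℕ} (P : Set (Fin n → ℝ)) : Prop :=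
  (∃ S : Finset (Fin n → ℝ), (∀ x ∈ S, IsLatticePoint x) ∧
    P = convexHull ℝ (S : Set (Fin n → ℝ))) ∧
  affineSpan ℝ P = ⊤

/-- A face of `P`: an exposed subset of `P`. -/
def IsFaceOf {n : ℕ} (F P : Set (Fin n → ℝ)) : Prop := IsExposed ℝ P F

/-- A facet of `P`: a face of affine dimension `n - 1`. -/
def IsFacetOf {n : ℕ} (F P : Set (Fin n → ℝ)) : Prop :=
  IsFaceOf F P ∧ Module.finrank ℝ (vectorSpan ℝ F) + 1 = n

/-- A set `S` of points of `ℝ^n` forms a `ℤ`-basis of `ℤ^n`: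
it consists of `n` lattice points whose matrix has determinant `±1`. -/
def IsUnimodularBasis {n : ℕ} (S : Set (Fin n → ℝ)) : Prop :=
  ∃ b : Fin n → (Fin n → ℝ), Function.Injective b ∧ Set.range b = S ∧
    (∀ i, IsLatticePoint (b i)) ∧ |(Matrix.of b).det| = 1

/-- A smooth Fano `n`-polytope: a lattice `n`-polytope with the origin in its
interior such that the vertex set of every facet is a `ℤ`-basis of `ℤ^n`. -/
def IsSmoothFano {n : ℕ} (P : Set (Fin n → ℝ)) : Prop :=
  IsLatticePolytope P ∧ (0 : Fin n → ℝ) ∈ interior P ∧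
    ∀ F : Set (Fin n → ℝ), IsFacetOf F P → IsUnimodularBasis (vertexSet P ∩ F)

/-- Two subsets of `ℝ^n` are unimodularly equivalent if an affine map of `ℝ^n`
mapping `ℤ^n` onto `ℤ^n` maps one onto the other. -/
def UnimodularEquiv {n : ℕ} (Q Q' : Set (Fin n → ℝ)) : Prop :=
  ∃ φ : (Fin n → ℝ) →ᵃ[ℝ] (Fin n → ℝ),
    φ '' {x | IsLatticePoint x} = {x | IsLatticePoint x} ∧ φ '' Q = Q'

/-- One step of an I-sequence: the vertex set of one polytope is obtained from
the vertex set of the other by adding one new lattice point. -/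
def IStep {n : ℕ} (P Q : Set (Fin n → ℝ)) : Prop :=
  (∃ w : Fin n → ℝ, IsLatticePoint w ∧ w ∉ vertexSet P ∧
    vertexSet Q = vertexSet P ∪ {w}) ∨
  (∃ w : Fin n → ℝ, IsLatticePoint w ∧ w ∉ vertexSet Q ∧
    vertexSet P = vertexSet Q ∪ {w})

/-- I-equivalence of smooth Fano `n`-polytopes. -/
def IEquiv {n : ℕ} (P Q : Set (Fin n → ℝ)) : Prop :=
  ∃ (k : ℕ) (c : Fin (k + 1) → Set (Fin n → ℝ)),
    (∀ i, IsSmoothFano (c i)) ∧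
    UnimodularEquiv P (c 0) ∧ UnimodularEquiv Q (c (Fin.last k)) ∧
    ∀ i : Fin k, IStep (c i.castSucc) (c i.succ)

/-- `Q` is the stellar subdivision of `P` at the new vertex `w`: `w` is the sum
of the vertices of a proper face `F` of `P`, and the facets of `Q` containing
`w` are exactly the sets `conv({w} ∪ (V(F') \ {v}))` for `F'` a facet of `P`
containing `F` and `v` a vertex of `F`. -/
def IsStellarSubdivisionAt {n : ℕ} (P Q : Set (Fin n → ℝ)) (w : Fin n → ℝ) : Prop :=
  ∃ F : Set (Fin n → ℝ), IsFaceOf F P ∧ F.Nonempty ∧ F ≠ P ∧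
    w = ∑ᶠ v ∈ vertexSet P ∩ F, v ∧
    {G : Set (Fin n → ℝ) | IsFacetOf G Q ∧ w ∈ G} =
      {G : Set (Fin n → ℝ) | ∃ F' v, IsFacetOf F' P ∧ F ⊆ F' ∧
        v ∈ vertexSet P ∩ F ∧
        G = convexHull ℝ (insert w ((vertexSet P ∩ F') \ {v}))}

/-- One step of an F-sequence: an I-step which moreover is a stellar
subdivision (or its inverse). -/
def FStep {n : ℕ} (P Q : Set (Fin n → ℝ)) : Prop :=
  (∃ w : Fin n → ℝ, IsLatticePoint w ∧ w ∉ vertexSet P ∧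
    vertexSet Q = vertexSet P ∪ {w} ∧ IsStellarSubdivisionAt P Q w) ∨
  (∃ w : Fin n → ℝ, IsLatticePoint w ∧ w ∉ vertexSet Q ∧
    vertexSet P = vertexSet Q ∪ {w} ∧ IsStellarSubdivisionAt Q P w)

/-- F-equivalence of smooth Fano `n`-polytopes. -/
def FEquiv {n : ℕ} (P Q : Set (Fin n → ℝ)) : Prop :=
  ∃ (k : ℕ) (c : Fin (k + 1) → Set (Fin n → ℝ)),
    (∀ i, IsSmoothFano (c i)) ∧
    UnimodularEquiv P (c 0) ∧ UnimodularEquiv Q (c (Fin.last k)) ∧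
    ∀ i : Fin k, FStep (c i.castSucc) (c i.succ)

/-- A smooth Fano polytope is F-isolated if every smooth Fano polytope
F-equivalent to it is unimodularly equivalent to it. -/
def FIsolated {n : ℕ} (P : Set (Fin n → ℝ)) : Prop :=
  ∀ Q : Set (Fin n → ℝ), IsSmoothFano Q → FEquiv Q P → UnimodularEquiv Q P

/-- A smooth Fano polytope is I-isolated if every smooth Fano polytope
I-equivalent to it is unimodularly equivalent to it. -/
def IIsolated {n : ℕ} (P : Set (Fin n → ℝ)) : Prop :=
  ∀ Q : Set (Fin n → ℝ), IsSmoothFano Q → IEquiv Q P → UnimodularEquiv Q P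

/-- A primitive collection of a smooth Fano polytope `P`: a nonempty set `A` of
vertices such that `conv(A)` is not a face of `P` but `conv(A \ {x})` is a face
of `P` for every `x ∈ A`. -/
def IsPrimitiveCollection {n : ℕ} (P A : Set (Fin n → ℝ)) : Prop :=
  A.Nonempty ∧ A ⊆ vertexSet P ∧ ¬ IsFaceOf (convexHull ℝ A) P ∧
    ∀ x ∈ A, IsFaceOf (convexHull ℝ (A \ {x})) P

/-- The standard basis vector `e_i` of `ℝ^n`. -/
def stdBasis {n : ℕ} (i : Fin n) : Fin n → ℝ := fun q => if q = i then 1 else 0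

/-- The polytope `T^n = conv{e_1, …, e_n, -(e_1 + ⋯ + e_n)}`,
corresponding to projective `n`-space. -/
def Tpoly (n : ℕ) : Set (Fin n → ℝ) :=
  convexHull ℝ (Set.range (stdBasis (n := n)) ∪ {fun _ => (-1 : ℝ)})

/-- `P` has the vertex labeling `v_1, …, v_a, y_1, …, y_b, z, t, u_1, …, u_b`
and its primitive collections and primitive relations are exactly:
`v_1+⋯+v_a+y_1+⋯+y_b = (a+b-1)t`; `y_1+⋯+y_b+z = u_1+⋯+u_b`; `z+t = 0`;
`t+u_1+⋯+u_b = y_1+⋯+y_b`; `u_1+⋯+u_b+v_1+⋯+v_a = (a+b-2)t`. -/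
def HasIsolatedStructure {n : ℕ} (P : Set (Fin n → ℝ)) (a b : ℕ)
    (v : Fin a → Fin n → ℝ) (y : Fin b → Fin n → ℝ) (z t : Fin n → ℝ)
    (u : Fin b → Fin n → ℝ) : Prop :=
  vertexSet P = Set.range v ∪ Set.range y ∪ {z, t} ∪ Set.range u ∧
  (∀ A : Set (Fin n → ℝ), IsPrimitiveCollection P A ↔
    (A = Set.range v ∪ Set.range y ∨ A = Set.range y ∪ {z} ∨ A = {z, t} ∨
     A = insert t (Set.range u) ∨ A = Set.range u ∪ Set.range v)) ∧
  (∑ i, v i) + (∑ j, y j) = ((a : ℝ) + (b : ℝ) - 1) • t ∧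
  (∑ j, y j) + z = (∑ j, u j) ∧
  z + t = 0 ∧
  t + (∑ j, u j) = (∑ j, y j) ∧
  (∑ j, u j) + (∑ i, v i) = ((a : ℝ) + (b : ℝ) - 2) • t

section Polytope

variable {n : ℕ} {Q : Set (Fin n → ℝ)}

theorem IsLatticePolytope.finite_vertexSet (hQ : IsLatticePolytope Q) : (vertexSet Q).Finite := by
  obtain ⟨⟨S, -, rfl⟩, -⟩ := hQ
  exact S.finite_toSet.subset extremePoints_convexHull_subset

theorem IsLatticePolytope.isLatticePoint (hQ : IsLatticePolytope Q) {x : Fin n → ℝ}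
    (hx : x ∈ vertexSet Q) : IsLatticePoint x := by
  obtain ⟨⟨S, hS, rfl⟩, -⟩ := hQ
  exact hS x (extremePoints_convexHull_subset hx)

theorem IsLatticePolytope.convexHull_vertexSet (hQ : IsLatticePolytope Q) :
    convexHull ℝ (vertexSet Q) = Q := by
  have hfin := hQ.finite_vertexSet
  obtain ⟨⟨S, -, rfl⟩, -⟩ := hQ
  have h := closure_convexHull_extremePoints (S.finite_toSet.isCompact_convexHull ℝ)
    (convex_convexHull ℝ (S : Set (Fin n → ℝ)))
  exact (hfin.isClosed_convexHull ℝ).closure_eq.symm.trans h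

theorem IsLatticePolytope.le_of_forall_vertexSet (hQ : IsLatticePolytope Q)
    (f : (Fin n → ℝ) →ₗ[ℝ] ℝ) {c : ℝ} (hf : ∀ x ∈ vertexSet Q, f x ≤ c) {x : Fin n → ℝ}
    (hx : x ∈ Q) : f x ≤ c := by
  rw [← hQ.convexHull_vertexSet] at hx
  exact convexHull_min (t := {x | f x ≤ c}) hf (convex_halfSpace_le f.isLinear c) hx

/-- A small positive multiple of any vector can be added to an interior point. -/
theorem exists_pos_add_smul_mem {x : Fin n → ℝ} (hx : x ∈ interior Q) (y : Fin n → ℝ) :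
    ∃ ε : ℝ, 0 < ε ∧ x + ε • y ∈ Q := by
  have hc : Filter.Tendsto (fun ε : ℝ => x + ε • y) (nhdsWithin 0 (Set.Ioi 0)) (nhds x) := by
    have : Continuous fun ε : ℝ => x + ε • y := by fun_prop
    simpa using (this.tendsto 0).mono_left nhdsWithin_le_nhds
  have h := hc.eventually (mem_interior_iff_mem_nhds.1 hx)
  obtain ⟨ε, h1, h2⟩ := (h.and self_mem_nhdsWithin).exists
  exact ⟨ε, h2, h1⟩

theorem IsSmoothFano.exists_vertex_pos (hQ : IsSmoothFano Q) {g : (Fin n → ℝ) →ₗ[ℝ] ℝ}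
    (hg : g ≠ 0) : ∃ x ∈ vertexSet Q, 0 < g x := by
  by_contra! h
  refine hg (LinearMap.ext fun y => ?_)
  have key : ∀ y, g y ≤ 0 := fun y => by
    obtain ⟨ε, hε, hy⟩ := exists_pos_add_smul_mem hQ.2.1 y
    have := hQ.1.le_of_forall_vertexSet g h hy
    simp only [zero_add, map_smul, smul_eq_mul] at this
    exact nonpos_of_mul_nonpos_right this hε
  have := key (-y)
  rw [map_neg] at this
  exact le_antisymm (key y) (neg_nonpos.1 this)

theorem IsSmoothFano.ne_zero_of_mem_vertexSet (hQ : IsSmoothFano Q) {x : Fin n → ℝ}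
    (hx : x ∈ vertexSet Q) (hn : 0 < n) : x ≠ 0 := by
  have : Nonempty (Fin n) := ⟨⟨0, hn⟩⟩
  rintro rfl
  exact (disjoint_interior_extremePoints (S := Q)).le_bot ⟨hQ.2.1, hx⟩

/-- Moving a functional bounded by `1` on the polytope in the direction `g` until a vertex becomes
tight. -/
theorem IsSmoothFano.exists_tight (hQ : IsSmoothFano Q) {f g : (Fin n → ℝ) →ₗ[ℝ] ℝ}
    (hf : ∀ x ∈ vertexSet Q, f x ≤ 1) (hg : g ≠ 0) :
    ∃ r : ℝ, ∃ e ∈ vertexSet Q, 0 < g e ∧ (∀ x ∈ vertexSet Q, (f + r • g) x ≤ 1) ∧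
      (f + r • g) e = 1 := by
  classical
  have hfin := hQ.1.finite_vertexSet
  obtain ⟨x₀, hx₀, hgx₀⟩ := hQ.exists_vertex_pos hg
  obtain ⟨e, he, hmin⟩ := Finset.exists_min_image (hfin.toFinset.filter fun x => 0 < g x)
    (fun x => (1 - f x) / g x) ⟨x₀, by simp [hx₀, hgx₀]⟩
  simp only [Finset.mem_filter, Set.Finite.mem_toFinset] at he hmin
  have hr : 0 ≤ (1 - f e) / g e := div_nonneg (by linarith [hf e he.1]) he.2.le
  refine ⟨(1 - f e) / g e, e, he.1, he.2, fun x hx => ?_, ?_⟩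
  · simp only [LinearMap.add_apply, LinearMap.smul_apply, smul_eq_mul]
    rcases le_or_gt (g x) 0 with h | h
    · nlinarith [hf x hx, mul_nonneg hr (neg_nonneg.2 h)]
    · have := (le_div_iff₀ h).1 (hmin x ⟨hx, h⟩)
      linarith
  · simp only [LinearMap.add_apply, LinearMap.smul_apply, smul_eq_mul]
    rw [div_mul_cancel₀ _ he.2.ne']
    ring

/-- The linear functional taking the value `1` on all vectors of a basis. -/
noncomputable def basisHeight (β : Module.Basis (Fin n) ℝ (Fin n → ℝ)) :
    (Fin n → ℝ) →ₗ[ℝ] ℝ :=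
  ∑ i, β.coord i

theorem basisHeight_apply (β : Module.Basis (Fin n) ℝ (Fin n → ℝ)) (x : Fin n → ℝ) :
    basisHeight β x = ∑ i, β.coord i x := by
  simp [basisHeight]

theorem basisHeight_self (β : Module.Basis (Fin n) ℝ (Fin n → ℝ)) (i : Fin n) :
    basisHeight β (β i) = 1 := by
  simp [basisHeight_apply, Finsupp.single_apply]

theorem eq_basisHeight {β : Module.Basis (Fin n) ℝ (Fin n → ℝ)} {f : (Fin n → ℝ) →ₗ[ℝ] ℝ}
    (hf : ∀ i, f (β i) = 1) : f = basisHeight β :=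
  β.ext fun i => by rw [hf, basisHeight_self]

/-- The basis `β` consists of the vertices of a facet of the smooth Fano polytope `Q`, that facet
being cut out by `basisHeight β ≤ 1`. -/
structure IsFacetBasis (Q : Set (Fin n → ℝ)) (β : Module.Basis (Fin n) ℝ (Fin n → ℝ)) : Prop where
  mem : ∀ i, β i ∈ vertexSet Q
  height_le : ∀ x ∈ vertexSet Q, basisHeight β x ≤ 1
  mem_range : ∀ x ∈ vertexSet Q, basisHeight β x = 1 → x ∈ Set.range β
  coord_int : ∀ x, IsLatticePoint x → ∀ i, ∃ m : ℤ, β.coord i x = m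

theorem IsFacetBasis.height_int {β : Module.Basis (Fin n) ℝ (Fin n → ℝ)} (hβ : IsFacetBasis Q β)
    {x : Fin n → ℝ} (hx : IsLatticePoint x) : ∃ m : ℤ, basisHeight β x = m := by
  choose m hm using hβ.coord_int x hx
  exact ⟨∑ i, m i, by simp [basisHeight_apply, ← hm]⟩

theorem exists_int_combination {b : Fin n → Fin n → ℝ} (hb : ∀ i, IsLatticePoint (b i))
    (hdet : |(Matrix.of b).det| = 1) {x : Fin n → ℝ} (hx : IsLatticePoint x) :
    ∃ d : Fin n → ℤ, x = ∑ i, (d i : ℝ) • b i := by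
  choose A hA using hb
  choose m hm using hx
  have hAb : Matrix.of b = (Matrix.of A).map (Int.castRingHom ℝ) := by
    ext i j; simp [hA]
  have hu : IsUnit (Matrix.of A).det := by
    rw [hAb, ← RingHom.mapMatrix_apply, ← RingHom.map_det] at hdet
    rw [Int.isUnit_iff_abs_eq]
    simp only [eq_intCast] at hdet
    exact_mod_cast hdet
  refine ⟨Matrix.vecMul m (Matrix.of A)⁻¹, ?_⟩
  have h : Matrix.vecMul (Matrix.vecMul m (Matrix.of A)⁻¹) (Matrix.of A) = m := by
    rw [Matrix.vecMul_vecMul, Matrix.nonsing_inv_mul _ hu, Matrix.vecMul_one]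
  generalize Matrix.vecMul m (Matrix.of A)⁻¹ = d at h
  ext j
  rw [hm, ← h]
  simp [Matrix.vecMul, dotProduct, hA]

/-- A functional bounded by `1` on `Q` and equal to `1` on a basis of vertices defines a facet. -/
theorem IsSmoothFano.isFacetBasis (hQ : IsSmoothFano Q) (hn : 0 < n)
    (β : Module.Basis (Fin n) ℝ (Fin n → ℝ)) (hmem : ∀ i, β i ∈ vertexSet Q)
    (hle : ∀ x ∈ vertexSet Q, basisHeight β x ≤ 1) : IsFacetBasis Q β := by
  set f := basisHeight β with hf
  set F : Set (Fin n → ℝ) := {x ∈ Q | f x = 1} with hF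
  have hβF : ∀ i, β i ∈ F := fun i => ⟨(hmem i).1, basisHeight_self β i⟩
  have hfacet : IsFacetOf F Q := by
    refine ⟨fun _ => ⟨LinearMap.toContinuousLinearMap f, ?_⟩, ?_⟩
    · ext x
      simp only [hF, Set.mem_ofPred_eq, LinearMap.coe_toContinuousLinearMap']
      refine and_congr_right fun hx => ⟨fun h y hy => ?_, fun h => ?_⟩
      · rw [h]; exact hQ.1.le_of_forall_vertexSet f hle hy
      · refine le_antisymm (hQ.1.le_of_forall_vertexSet f hle hx) ?_
        rw [← basisHeight_self β ⟨0, hn⟩]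
        exact h _ (hmem _).1
    · have hker : vectorSpan ℝ F ≤ LinearMap.ker f := by
        rw [vectorSpan_def, Submodule.span_le]
        rintro _ ⟨x, hx, y, hy, rfl⟩
        simp [hx.2, hy.2]
      have hsup : vectorSpan ℝ F ⊔ Submodule.span ℝ {β ⟨0, hn⟩} = ⊤ := by
        rw [eq_top_iff, ← β.span_eq, Submodule.span_le]
        rintro _ ⟨i, rfl⟩
        rw [← sub_add_cancel (β i) (β ⟨0, hn⟩)]
        exact add_mem (Submodule.mem_sup_left (vsub_mem_vectorSpan ℝ (hβF i) (hβF _)))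
          (Submodule.mem_sup_right (Submodule.mem_span_singleton_self _))
      have h1 : LinearMap.ker f ≠ ⊤ := fun h => by
        have := basisHeight_self β ⟨0, hn⟩
        rw [← hf, LinearMap.ker_eq_top.1 h] at this
        simp at this
      have h2 := Submodule.finrank_lt (lt_of_le_of_lt hker h1.lt_top).ne
      have h3 := Submodule.finrank_add_le_finrank_add_finrank (vectorSpan ℝ F)
        (Submodule.span ℝ {β ⟨0, hn⟩})
      have h4 : Module.finrank ℝ (Submodule.span ℝ {β ⟨0, hn⟩}) = 1 :=
        finrank_span_singleton (β.ne_zero _)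
      rw [hsup, finrank_top] at h3
      simp only [Module.finrank_fin_fun] at h2 h3
      omega
  obtain ⟨b, hbinj, hbr, hblat, hdet⟩ := hQ.2.2 F hfacet
  have hsub : Set.range β ⊆ Set.range b := by
    rw [hbr]
    rintro _ ⟨i, rfl⟩
    exact ⟨hmem i, hβF i⟩
  have heq : Set.range β = Set.range b := by
    refine Set.eq_of_subset_of_ncard_le hsub ?_ (Set.finite_range b)
    rw [← Set.image_univ, ← Set.image_univ, Set.ncard_image_of_injective _ hbinj,
      Set.ncard_image_of_injective _ β.injective]
  refine ⟨hmem, hle, fun x hx h1 => ?_, fun x hx i => ?_⟩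
  · rw [heq, hbr]
    exact ⟨hx, hx.1, h1⟩
  · obtain ⟨d, rfl⟩ := exists_int_combination hblat hdet hx
    have hσ : ∀ k, ∃ j, β j = b k := fun k => by
      rw [← Set.mem_range, heq]; exact Set.mem_range_self k
    choose σ hσ using hσ
    refine ⟨∑ k, d k * if σ k = i then 1 else 0, ?_⟩
    simp [← hσ, Finsupp.single_apply]

theorem IsSmoothFano.exists_isFacetBasis (hQ : IsSmoothFano Q) (hn : 0 < n) :
    ∃ β, IsFacetBasis Q β := by
  classical
  let T (f : (Fin n → ℝ) →ₗ[ℝ] ℝ) : Set (Fin n → ℝ) := {x ∈ vertexSet Q | f x = 1}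
  let p (k : ℕ) : Prop := ∃ f : (Fin n → ℝ) →ₗ[ℝ] ℝ, (∀ x ∈ vertexSet Q, f x ≤ 1) ∧
    Module.finrank ℝ (Submodule.span ℝ (T f)) = k
  have hp : p (Nat.findGreatest p n) :=
    Nat.findGreatest_spec (m := Module.finrank ℝ (Submodule.span ℝ (T 0)))
      (by simpa using Submodule.finrank_le (Submodule.span ℝ (T 0))) ⟨0, by simp, rfl⟩
  obtain ⟨f, hf, hk⟩ := hp
  have htop : Submodule.span ℝ (T f) = ⊤ := by
    by_contra hne
    obtain ⟨g, hg0, hg⟩ := Submodule.exists_le_ker_of_lt_top _ (lt_top_iff_ne_top.2 hne)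
    obtain ⟨r, e, he, hge, hle, h1⟩ := hQ.exists_tight hf hg0
    have hlt : Submodule.span ℝ (T f) < Submodule.span ℝ (T (f + r • g)) := by
      refine lt_of_le_of_ne (Submodule.span_mono fun x hx => ⟨hx.1, ?_⟩) fun h => ?_
      · have : g x = 0 := hg (Submodule.subset_span hx)
        simp [this, hx.2]
      · have he' : e ∈ Submodule.span ℝ (T f) := by
          rw [h]; exact Submodule.subset_span ⟨he, h1⟩
        exact hge.ne' (hg he')
    have h2 := Submodule.finrank_lt_finrank_of_lt hlt
    have h3 := Nat.le_findGreatest (P := p) (n := n)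
      (by simpa using Submodule.finrank_le (Submodule.span ℝ (T (f + r • g)))) ⟨_, hle, rfl⟩
    omega
  obtain ⟨s, hs, hspan, hli⟩ := exists_linearIndependent ℝ (T f)
  rw [htop] at hspan
  let β₀ : Module.Basis s ℝ (Fin n → ℝ) := Module.Basis.mk hli (by simp [hspan])
  have : Fintype s := FiniteDimensional.fintypeBasisIndex β₀
  let β := β₀.reindex (Fintype.equivFinOfCardEq
    (by rw [← Module.finrank_eq_card_basis β₀, Module.finrank_fin_fun]))
  have hβ : ∀ i, β i ∈ T f := fun i => by simpa [β, β₀] using hs (Subtype.coe_prop _)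
  have hfβ : f = basisHeight β := eq_basisHeight fun i => (hβ i).2
  exact ⟨β, hQ.isFacetBasis hn β (fun i => (hβ i).1) (hfβ ▸ hf)⟩

/-- The facet adjacent to a given one along the ridge opposite to its `i`-th vertex. -/
theorem IsFacetBasis.exists_adjacent (hQ : IsSmoothFano Q)
    {β : Module.Basis (Fin n) ℝ (Fin n → ℝ)} (hβ : IsFacetBasis Q β) (i : Fin n) :
    ∃ β', IsFacetBasis Q β' ∧ (∀ j ≠ i, β' j = β j) ∧ β.coord i (β' i) = -1 ∧
      basisHeight β' (β i) < 1 := by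
  have hn : 0 < n := i.pos
  have hg0 : -β.coord i ≠ 0 := fun h => by
    simpa using LinearMap.congr_fun h (β i)
  obtain ⟨r, e, he, hge, hle, h1⟩ := hQ.exists_tight hβ.height_le hg0
  have hge' : β.coord i e < 0 := by simpa using hge
  have hspan : ⊤ ≤ Submodule.span ℝ (Set.range (Function.update β i e)) := by
    have hj : ∀ j ≠ i, β j ∈ Submodule.span ℝ (Set.range (Function.update β i e)) :=
      fun j hj => Submodule.subset_span ⟨j, by simp [hj]⟩
    have hee : e ∈ Submodule.span ℝ (Set.range (Function.update β i e)) :=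
      Submodule.subset_span ⟨i, by simp⟩
    rw [← β.span_eq, Submodule.span_le]
    rintro _ ⟨j, rfl⟩
    by_cases hji : j = i
    · subst hji
      have hsum := β.sum_repr e
      rw [← Finset.add_sum_erase _ _ (Finset.mem_univ j)] at hsum
      have h2 : β j = (β.coord j e)⁻¹ • (e - ∑ k ∈ Finset.univ.erase j, β.repr e k • β k) := by
        rw [eq_inv_smul_iff₀ hge'.ne, eq_sub_iff_add_eq, Module.Basis.coord_apply, hsum]
      rw [h2]
      exact Submodule.smul_mem _ _ (sub_mem hee (Submodule.sum_mem _ fun k hk =>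
        Submodule.smul_mem _ _ (hj k (Finset.ne_of_mem_erase hk))))
    · exact hj j hji
  let β' := basisOfTopLeSpanOfCardEqFinrank _ hspan (by simp)
  have hβ'i : β' i = e := by simp [β']
  have hβ'j : ∀ j ≠ i, β' j = β j := fun j hj => by simp [β', hj]
  have hheight : basisHeight β + r • -β.coord i = basisHeight β' := by
    refine eq_basisHeight fun j => ?_
    by_cases hji : j = i
    · rw [hji, hβ'i, h1]
    · rw [hβ'j j hji]
      simp [basisHeight_self, hji]
  have hβ' : IsFacetBasis Q β' := by
    refine hQ.isFacetBasis hn β' (fun j => ?_) (hheight ▸ hle)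
    by_cases hji : j = i
    · rwa [hji, hβ'i]
    · rw [hβ'j j hji]; exact hβ.mem j
  have hcoord : β.coord i = β.coord i e • β'.coord i := by
    refine β'.ext fun j => ?_
    by_cases hji : j = i
    · have h2 : β'.coord i e = 1 := by
        rw [← hβ'i]; simp
      rw [hji, hβ'i, LinearMap.smul_apply, h2, smul_eq_mul, mul_one]
    · have h2 : β'.coord i (β j) = 0 := by
        rw [← hβ'j j hji]; simp [hji]
      rw [hβ'j j hji, LinearMap.smul_apply, h2]
      simp [hji]
  have hcoord' : 1 = β.coord i e * β'.coord i (β i) := by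
    have := LinearMap.congr_fun hcoord (β i)
    simpa only [LinearMap.smul_apply, smul_eq_mul, Module.Basis.coord_apply,
      Module.Basis.repr_self, Finsupp.single_eq_same] using this
  have hone : β.coord i e = -1 := by
    obtain ⟨m, hm⟩ := hβ.coord_int e (hQ.1.isLatticePoint he) i
    obtain ⟨k, hk⟩ := hβ'.coord_int _ (hQ.1.isLatticePoint (hβ.mem i)) i
    rw [hm, hk] at hcoord'
    rw [hm] at hge' ⊢
    have h3 : 1 = m * k := by exact_mod_cast hcoord'
    have h4 : m < 0 := by exact_mod_cast hge'
    rcases Int.eq_one_or_neg_one_of_mul_eq_one h3.symm with h | h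
    · omega
    · simp [h]
  refine ⟨β', hβ', hβ'j, by rw [hβ'i, hone], lt_of_le_of_ne (hβ'.height_le _ (hβ.mem i)) ?_⟩
  intro h
  obtain ⟨j, hj⟩ := hβ'.mem_range _ (hβ.mem i) h
  by_cases hji : j = i
  · rw [hji, hβ'i] at hj
    rw [hj] at hone
    norm_num at hone
  · rw [hβ'j j hji] at hj
    exact hji (β.injective hj)

/-- Every point lies in the cone over some facet. -/
theorem IsSmoothFano.exists_isFacetBasis_coord_nonneg (hQ : IsSmoothFano Q) (hn : 0 < n)
    (x : Fin n → ℝ) : ∃ β, IsFacetBasis Q β ∧ ∀ i, 0 ≤ β.coord i x := by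
  have hfin : {β : Module.Basis (Fin n) ℝ (Fin n → ℝ) | IsFacetBasis Q β}.Finite := by
    refine Set.Finite.of_finite_image (f := fun β => (β : Fin n → Fin n → ℝ)) ?_
      (fun _ _ _ _ h => Module.Basis.eq_of_apply_eq (congrFun h))
    refine (Set.Finite.pi' fun _ : Fin n => hQ.1.finite_vertexSet).subset ?_
    rintro _ ⟨β, hβ, rfl⟩
    exact hβ.mem
  obtain ⟨β, hβ, hmax⟩ := Set.exists_max_image _ (fun β => basisHeight β x) hfin
    (hQ.exists_isFacetBasis hn)
  refine ⟨β, hβ, fun i => ?_⟩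
  by_contra! hi
  obtain ⟨β', hβ', hj, -, hlt⟩ := hβ.exists_adjacent hQ i
  have hh : basisHeight β' = basisHeight β + (basisHeight β' (β i) - 1) • β.coord i := by
    refine β.ext fun j => ?_
    by_cases hji : j = i
    · simp [hji, basisHeight_self]
    · rw [← hj j hji, basisHeight_self, hj j hji]
      simp [basisHeight_self, hji]
  have h1 := hmax β' hβ'
  rw [hh] at h1
  simp only [LinearMap.add_apply, LinearMap.smul_apply, smul_eq_mul] at h1
  nlinarith

/-- A nonzero lattice point of height less than `2` over the facet containing it is a vertex. -/
theorem IsSmoothFano.exists_height_of_isLatticePoint (hQ : IsSmoothFano Q) (hn : 0 < n)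
    {x : Fin n → ℝ} (hx : IsLatticePoint x) (hx0 : x ≠ 0) :
    ∃ β, IsFacetBasis Q β ∧ 1 ≤ basisHeight β x ∧
      (basisHeight β x < 2 → x ∈ Set.range β) := by
  obtain ⟨β, hβ, hpos⟩ := hQ.exists_isFacetBasis_coord_nonneg hn x
  choose m hm using hβ.coord_int x hx
  have hm0 : ∀ i, 0 ≤ m i := fun i => by have := hpos i; rw [hm] at this; exact_mod_cast this
  have hsum : basisHeight β x = ((∑ i, m i : ℤ) : ℝ) := by simp [basisHeight_apply, ← hm]
  have hex : ∃ i, m i ≠ 0 := by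
    by_contra! h
    exact hx0 (β.ext_elem fun i => by simpa [h] using hm i)
  obtain ⟨i, hi⟩ := hex
  have hi1 : 1 ≤ m i := by have := hm0 i; omega
  have hsplit := Finset.add_sum_erase Finset.univ m (Finset.mem_univ i)
  have hrest : 0 ≤ ∑ j ∈ Finset.univ.erase i, m j := Finset.sum_nonneg fun j _ => hm0 j
  refine ⟨β, hβ, ?_, fun h => ⟨i, ?_⟩⟩
  · rw [hsum]; exact_mod_cast (by omega : (1 : ℤ) ≤ ∑ i, m i)
  · rw [hsum] at h
    have h2 : ∑ i, m i < 2 := by exact_mod_cast h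
    have h3 : ∑ j ∈ Finset.univ.erase i, m j = 0 := by omega
    have h4 : m i = 1 := by omega
    rw [Finset.sum_eq_zero_iff_of_nonneg fun j _ => hm0 j] at h3
    refine β.ext_elem fun j => ?_
    rw [← Module.Basis.coord_apply, ← Module.Basis.coord_apply, hm]
    by_cases hji : j = i
    · simp [hji, h4]
    · simp [h3 j (by simp [hji]), Ne.symm hji]

theorem IsSmoothFano.eq_zero_of_mem_interior (hQ : IsSmoothFano Q) (hn : 0 < n)
    {x : Fin n → ℝ} (hx : IsLatticePoint x) (hxi : x ∈ interior Q) : x = 0 := by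
  by_contra hx0
  obtain ⟨β, hβ, h1, -⟩ := hQ.exists_height_of_isLatticePoint hn hx hx0
  obtain ⟨ε, hε, hy⟩ := exists_pos_add_smul_mem hxi x
  have := hQ.1.le_of_forall_vertexSet _ hβ.height_le hy
  simp only [map_add, map_smul, smul_eq_mul] at this
  nlinarith

theorem IsSmoothFano.exists_isFacetBasis_mem (hQ : IsSmoothFano Q) (hn : 0 < n)
    {x : Fin n → ℝ} (hx : x ∈ vertexSet Q) : ∃ β, IsFacetBasis Q β ∧ basisHeight β x = 1 := by
  obtain ⟨β, hβ, h1, -⟩ := hQ.exists_height_of_isLatticePoint hn (hQ.1.isLatticePoint hx)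
    (hQ.ne_zero_of_mem_vertexSet hx hn)
  exact ⟨β, hβ, le_antisymm (hβ.height_le x hx) h1⟩

/-- The facet adjacent to a given one along the ridge opposite to its `i`-th vertex, together with
its new vertex `e`. -/
theorem IsFacetBasis.exists_adjacent_vertex (hQ : IsSmoothFano Q)
    {β : Module.Basis (Fin n) ℝ (Fin n → ℝ)} (hβ : IsFacetBasis Q β) (i : Fin n) :
    ∃ β', ∃ e ∈ vertexSet Q, IsFacetBasis Q β' ∧ basisHeight β' (β i) < 1 ∧ β.coord i e = -1 ∧
      basisHeight β e ≠ 1 ∧ basisHeight β' e = 1 ∧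
      (∀ x ∈ vertexSet Q, x ≠ β i → basisHeight β x = 1 → basisHeight β' x = 1) ∧
      ∀ x ∈ vertexSet Q, basisHeight β x ≠ 1 → basisHeight β' x = 1 → x = e := by
  obtain ⟨β', hβ', hj, hcoord, hlt⟩ := hβ.exists_adjacent hQ i
  refine ⟨β', β' i, hβ'.mem i, hβ', hlt, hcoord, fun h1 => ?_, basisHeight_self β' i,
    fun x hx hne h1 => ?_, fun x hx h1 h1' => ?_⟩
  · obtain ⟨m, hm⟩ := hβ.mem_range _ (hβ'.mem i) h1
    rw [← hm] at hcoord
    by_cases hmi : m = i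
    · rw [hmi] at hcoord; norm_num at hcoord
    · norm_num [hmi] at hcoord
  · obtain ⟨m, rfl⟩ := hβ.mem_range x hx h1
    rw [← hj m fun hm => hne (by rw [hm]), basisHeight_self]
  · obtain ⟨m, rfl⟩ := hβ'.mem_range x hx h1'
    by_cases hm : m = i
    · rw [hm]
    · rw [hj m hm, basisHeight_self] at h1
      exact absurd rfl h1

/-- For every vertex of a facet there is another facet containing all other vertices of it. -/
theorem IsFacetBasis.exists_adjacent_height (hQ : IsSmoothFano Q)
    {β : Module.Basis (Fin n) ℝ (Fin n → ℝ)} (hβ : IsFacetBasis Q β) {x : Fin n → ℝ}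
    (hx : x ∈ vertexSet Q) (hx1 : basisHeight β x = 1) :
    ∃ β', IsFacetBasis Q β' ∧ basisHeight β' x < 1 ∧
      ∀ y ∈ vertexSet Q, y ≠ x → basisHeight β y = 1 → basisHeight β' y = 1 := by
  obtain ⟨i, rfl⟩ := hβ.mem_range x hx hx1
  obtain ⟨β', e, -, hβ', hlt, -, -, -, hkeep, -⟩ := hβ.exists_adjacent_vertex hQ i
  exact ⟨β', hβ', hlt, hkeep⟩

/-- The coordinates of a vertex of the facet are nonnegative. -/
theorem IsFacetBasis.coord_nonneg {β : Module.Basis (Fin n) ℝ (Fin n → ℝ)} (hβ : IsFacetBasis Q β)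
    {x : Fin n → ℝ} (hx : x ∈ vertexSet Q) (hx1 : basisHeight β x = 1) (i : Fin n) :
    0 ≤ β.coord i x := by
  obtain ⟨j, rfl⟩ := hβ.mem_range x hx hx1
  simp only [Module.Basis.coord_apply, Module.Basis.repr_self, Finsupp.single_apply]
  split_ifs <;> norm_num

end Polytope

section Counting

/-- The number of nonzero values of a function on a finite type. -/
def numNonzero {k : ℕ} (D : Fin k → ℕ) : ℕ := ∑ i, if D i = 0 then 0 else 1

theorem numNonzero_le_sum {k : ℕ} (D : Fin k → ℕ) : numNonzero D ≤ ∑ i, D i :=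
  Finset.sum_le_sum fun i _ => by split_ifs <;> omega

theorem eq_zero_of_numNonzero_eq_zero {k : ℕ} {D : Fin k → ℕ} (h : numNonzero D = 0) (i : Fin k) :
    D i = 0 := by
  have := (Finset.sum_eq_zero_iff.1 h) i (Finset.mem_univ i)
  by_contra hi
  simp [hi] at this

theorem sum_eq_zero_of_numNonzero_eq_zero {k : ℕ} {D : Fin k → ℕ} (h : numNonzero D = 0) :
    ∑ i, D i = 0 :=
  Finset.sum_eq_zero fun i _ => eq_zero_of_numNonzero_eq_zero h i

theorem exists_unique_of_numNonzero_eq_one {k : ℕ} {D : Fin k → ℕ} (h : numNonzero D = 1) :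
    ∃ j, D j ≠ 0 ∧ ∀ i ≠ j, D i = 0 := by
  have hex : ∃ j, D j ≠ 0 := by
    by_contra! h0
    simp [numNonzero, h0] at h
  obtain ⟨j, hj⟩ := hex
  refine ⟨j, hj, fun i hi => ?_⟩
  by_contra h0
  have h2 : ∑ l ∈ {i, j}, (if D l = 0 then 0 else 1) ≤ numNonzero D :=
    Finset.sum_le_sum_of_subset (Finset.subset_univ _)
  rw [Finset.sum_pair hi] at h2
  simp only [h0, hj, if_false] at h2
  omega

theorem IsFacetBasis.count_not_tight {n : ℕ} {Q : Set (Fin n → ℝ)}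
    {β : Module.Basis (Fin n) ℝ (Fin n → ℝ)} (hβ : IsFacetBasis Q β) {L : Type*} [Fintype L]
    {p : L → Fin n → ℝ} (hp : Function.Injective p) (hV : vertexSet Q = Set.range p) :
    (∑ l, if basisHeight β (p l) = 1 then 0 else 1) + n = Fintype.card L := by
  classical
  have hσ : ∀ i, ∃ l, p l = β i := fun i => by
    rw [← Set.mem_range, ← hV]; exact hβ.mem i
  choose σ hσ using hσ
  have hσinj : Function.Injective σ := fun i j h => β.injective (by rw [← hσ, ← hσ, h])
  have himg : Finset.univ.image σ = Finset.univ.filter fun l => basisHeight β (p l) = 1 := by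
    ext l
    simp only [Finset.mem_image, Finset.mem_univ, true_and, Finset.mem_filter]
    refine ⟨?_, fun h => ?_⟩
    · rintro ⟨i, rfl⟩
      rw [hσ, basisHeight_self]
    · obtain ⟨i, hi⟩ := hβ.mem_range (p l) (hV ▸ Set.mem_range_self l) h
      exact ⟨i, hp (by rw [hσ, hi])⟩
  have hcard : (Finset.univ.filter fun l => basisHeight β (p l) = 1).card = n := by
    rw [← himg, Finset.card_image_of_injective _ hσinj, Finset.card_fin]
  have hcompl : (∑ l, if basisHeight β (p l) = 1 then 0 else 1) =
      (Finset.univ.filter fun l => ¬ basisHeight β (p l) = 1).card := by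
    rw [Finset.card_filter]
    exact Finset.sum_congr rfl fun l _ => by split_ifs <;> rfl
  have htotal := Finset.card_filter_add_card_filter_not (s := (Finset.univ : Finset L))
    fun l => basisHeight β (p l) = 1
  rw [hcard, Finset.card_univ] at htotal
  rw [hcompl, ← htotal, add_comm]

end Counting

section Extension

variable {n a b : ℕ}

/-- The labelling of the `a + 2 b + 2` vertices. -/
def vertexLabel (v : Fin a → Fin n → ℝ) (y : Fin b → Fin n → ℝ) (z t : Fin n → ℝ)
    (u : Fin b → Fin n → ℝ) : Fin a ⊕ Fin b ⊕ Fin b ⊕ Bool → Fin n → ℝ :=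
  Sum.elim v (Sum.elim y (Sum.elim u fun c => cond c z t))

/-- The linear relations between the labelled vertices, without reference to a polytope. -/
structure IsolatedRelations (v : Fin a → Fin n → ℝ) (y : Fin b → Fin n → ℝ) (z t : Fin n → ℝ)
    (u : Fin b → Fin n → ℝ) : Prop where
  two_le_a : 2 ≤ a
  two_le_b : 2 ≤ b
  dim : n + 1 = a + 2 * b
  injective : Function.Injective (vertexLabel v y z t u)
  sum_v_y : (∑ i, v i) + (∑ j, y j) = ((a : ℝ) + (b : ℝ) - 1) • t
  z_eq : z = -t
  sum_u : t + (∑ j, u j) = ∑ j, y j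

/-- The smooth Fano polytope `Q` has the labelled vertices and one more vertex `w`. -/
structure IsOneVertexExtension (Q : Set (Fin n → ℝ)) (v : Fin a → Fin n → ℝ)
    (y : Fin b → Fin n → ℝ) (z t : Fin n → ℝ) (u : Fin b → Fin n → ℝ) (w : Fin n → ℝ) : Prop
    extends IsolatedRelations v y z t u where
  smooth : IsSmoothFano Q
  not_mem : w ∉ Set.range (vertexLabel v y z t u)
  vertexSet_eq : vertexSet Q = Set.range (vertexLabel v y z t u) ∪ {w}

namespace IsOneVertexExtension

variable {Q : Set (Fin n → ℝ)} {v : Fin a → Fin n → ℝ} {y : Fin b → Fin n → ℝ} {z t : Fin n → ℝ}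
  {u : Fin b → Fin n → ℝ} {w : Fin n → ℝ} {β : Module.Basis (Fin n) ℝ (Fin n → ℝ)}

theorem mem_of_label (h : IsOneVertexExtension Q v y z t u w) (l : Fin a ⊕ Fin b ⊕ Fin b ⊕ Bool) :
    vertexLabel v y z t u l ∈ vertexSet Q := by
  rw [h.vertexSet_eq]; exact Or.inl (Set.mem_range_self l)

theorem v_mem (h : IsOneVertexExtension Q v y z t u w) (i : Fin a) : v i ∈ vertexSet Q :=
  h.mem_of_label (.inl i)

theorem y_mem (h : IsOneVertexExtension Q v y z t u w) (j : Fin b) : y j ∈ vertexSet Q :=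
  h.mem_of_label (.inr (.inl j))

theorem u_mem (h : IsOneVertexExtension Q v y z t u w) (j : Fin b) : u j ∈ vertexSet Q :=
  h.mem_of_label (.inr (.inr (.inl j)))

theorem z_mem (h : IsOneVertexExtension Q v y z t u w) : z ∈ vertexSet Q :=
  h.mem_of_label (.inr (.inr (.inr true)))

theorem t_mem (h : IsOneVertexExtension Q v y z t u w) : t ∈ vertexSet Q :=
  h.mem_of_label (.inr (.inr (.inr false)))

theorem w_mem (h : IsOneVertexExtension Q v y z t u w) : w ∈ vertexSet Q := by
  rw [h.vertexSet_eq]; exact Or.inr rfl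

theorem label_ne_w (h : IsOneVertexExtension Q v y z t u w) (l : Fin a ⊕ Fin b ⊕ Fin b ⊕ Bool) :
    w ≠ vertexLabel v y z t u l :=
  fun hl => h.not_mem ⟨l, hl.symm⟩

/-- The values of a facet functional on the vertices of a one-vertex extension. -/
theorem exists_deficits (h : IsOneVertexExtension Q v y z t u w) (hβ : IsFacetBasis Q β) :
    ∃ (Dv : Fin a → ℕ) (Dy Du : Fin b → ℕ) (s : ℤ),
      (∀ i, basisHeight β (v i) = 1 ↔ Dv i = 0) ∧ (∀ j, basisHeight β (y j) = 1 ↔ Dy j = 0) ∧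
      (∀ j, basisHeight β (u j) = 1 ↔ Du j = 0) ∧ (basisHeight β t = 1 ↔ s = 1) ∧
      (basisHeight β z = 1 ↔ s = -1) ∧ (s = 0 → basisHeight β z = 0) ∧
      (s = -1 ∧ (∑ i, Dv i) + (∑ j, Dy j) = 2 * (a + b) - 1 ∧ (∑ j, Du j) + 1 = ∑ j, Dy j ∨
        s = 0 ∧ (∑ i, Dv i) + (∑ j, Dy j) = a + b ∧ (∑ j, Du j) = ∑ j, Dy j ∨
        s = 1 ∧ (∑ i, Dv i) + (∑ j, Dy j) = 1 ∧ (∑ j, Du j) = (∑ j, Dy j) + 1) ∧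
      numNonzero Dv + numNonzero Dy + numNonzero Du + (if s = -1 then 0 else 1) +
        (if s = 1 then 0 else 1) + (if basisHeight β w = 1 then 0 else 1) = 4 := by
  have hint : ∀ x ∈ vertexSet Q, ∃ d : ℕ, basisHeight β x = 1 - d := fun x hx => by
    obtain ⟨m, hm⟩ := hβ.height_int (h.smooth.1.isLatticePoint hx)
    have h1 := hβ.height_le x hx
    rw [hm] at h1
    have h2 : m ≤ 1 := by exact_mod_cast h1
    refine ⟨(1 - m).toNat, ?_⟩
    have h3 : (((1 - m).toNat : ℤ) : ℝ) = ((1 - m : ℤ) : ℝ) := by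
      rw [Int.toNat_of_nonneg (by omega)]
    rw [hm]
    push_cast at h3
    rw [h3]; ring
  choose Dv hDv using fun i => hint _ (h.v_mem i)
  choose Dy hDy using fun j => hint _ (h.y_mem j)
  choose Du hDu using fun j => hint _ (h.u_mem j)
  obtain ⟨s, hs⟩ := hβ.height_int (h.smooth.1.isLatticePoint h.t_mem)
  have hz : basisHeight β z = -s := by rw [h.z_eq, map_neg, hs]
  have hs1 : s ≤ 1 := by
    have := hβ.height_le t h.t_mem
    rw [hs] at this; exact_mod_cast this
  have hs2 : -s ≤ 1 := by
    have := hβ.height_le z h.z_mem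
    rw [hz] at this; exact_mod_cast this
  have r1 := congrArg (basisHeight β) h.sum_v_y
  have r2 := congrArg (basisHeight β) h.sum_u
  simp only [map_add, map_sum, map_smul, smul_eq_mul, hDv, hDy, hDu, hs, Finset.sum_sub_distrib,
    Finset.sum_const, Finset.card_univ, Fintype.card_fin, nsmul_eq_mul, mul_one] at r1 r2
  have r1' : ((a : ℤ) - ∑ i, (Dv i : ℤ)) + (b - ∑ j, (Dy j : ℤ)) = (a + b - 1) * s := by
    exact_mod_cast r1
  have r2' : s + (b - ∑ j, (Du j : ℤ)) = b - ∑ j, (Dy j : ℤ) := by exact_mod_cast r2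
  rw [← Nat.cast_sum, ← Nat.cast_sum] at r1' r2'
  have ha := h.two_le_a
  have hcount := hβ.count_not_tight
    (p := fun l : Option _ => l.elim w (vertexLabel v y z t u))
    (by
      rintro (_ | l) (_ | m) hlm
      · rfl
      · exact absurd hlm (h.label_ne_w m)
      · exact absurd hlm.symm (h.label_ne_w l)
      · exact congrArg some (h.injective hlm))
    (by
      rw [h.vertexSet_eq]
      ext x
      constructor
      · rintro (⟨l, rfl⟩ | rfl)
        exacts [⟨some l, rfl⟩, ⟨none, rfl⟩]
      · rintro ⟨_ | l, rfl⟩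
        exacts [Or.inr rfl, Or.inl ⟨l, rfl⟩])
  have hst : ((s : ℝ) = 1 ↔ s = 1) := by exact_mod_cast Iff.rfl
  have hsz : (-(s : ℝ) = 1 ↔ s = -1) := by
    rw [neg_eq_iff_eq_neg]; exact_mod_cast Iff.rfl
  simp only [Fintype.sum_option, Fintype.sum_sum_type, Fintype.sum_bool, Option.elim, vertexLabel,
    Sum.elim_inl, Sum.elim_inr, cond_true, cond_false, hDv, hDy, hDu, hs, hz, sub_eq_self,
    Nat.cast_eq_zero, hst, hsz, Fintype.card_option, Fintype.card_sum, Fintype.card_fin,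
    Fintype.card_bool] at hcount
  have hdim := h.dim
  refine ⟨Dv, Dy, Du, s, fun i => by simp [hDv], fun j => by simp [hDy], fun j => by simp [hDu],
    by rw [hs, hst], by rw [hz, hsz], fun h0 => by simp [hz, h0], ?_, ?_⟩
  · obtain rfl | rfl | rfl : s = -1 ∨ s = 0 ∨ s = 1 := by omega
    · left; omega
    · right; left; omega
    · right; right; omega
  · unfold numNonzero
    by_cases hw : basisHeight β w = 1 <;> simp only [hw, if_true, if_false] at hcount ⊢ <;> omega

/-- A facet containing `t` and `w` contains every `v i`. -/
theorem v_tight_of_t_w (h : IsOneVertexExtension Q v y z t u w) (hβ : IsFacetBasis Q β)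
    (ht : basisHeight β t = 1) (hw : basisHeight β w = 1) (i : Fin a) :
    basisHeight β (v i) = 1 := by
  obtain ⟨Dv, Dy, Du, s, hv, -, -, hst, -, -, hsum, hcount⟩ := h.exists_deficits hβ
  obtain rfl := hst.1 ht
  have h1 := numNonzero_le_sum Dv
  have h2 := numNonzero_le_sum Dy
  have h3 := numNonzero_le_sum Du
  simp only [hw, if_true] at hcount
  rw [hv]
  refine eq_zero_of_numNonzero_eq_zero ?_ i
  norm_num at hcount hsum
  omega

theorem not_t_w (h : IsOneVertexExtension Q v y z t u w) (hβ : IsFacetBasis Q β)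
    (hw : basisHeight β w = 1) : basisHeight β t ≠ 1 := by
  intro ht
  have i : Fin a := ⟨0, by have := h.two_le_a; omega⟩
  obtain ⟨β', hβ', hlt, hne⟩ := hβ.exists_adjacent_height h.smooth (h.v_mem i)
    (h.v_tight_of_t_w hβ ht hw i)
  refine hlt.ne (h.v_tight_of_t_w hβ' (hne t h.t_mem ?_ ht) (hne w h.w_mem ?_ hw) i)
  · exact h.injective.ne (a₁ := .inr (.inr (.inr false))) (a₂ := .inl i) (by simp)
  · exact h.label_ne_w (.inl i)

/-- A facet containing `w` but not `z` contains every `v i` and misses exactly one `y j` and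
one `u k`. -/
theorem structure_of_w_not_z (h : IsOneVertexExtension Q v y z t u w) (hβ : IsFacetBasis Q β)
    (hw : basisHeight β w = 1) (hz : basisHeight β z ≠ 1) :
    basisHeight β z = 0 ∧ (∀ i, basisHeight β (v i) = 1) ∧
      (∃ j, basisHeight β (y j) ≠ 1 ∧ ∀ i ≠ j, basisHeight β (y i) = 1) ∧
      (∃ k, basisHeight β (u k) ≠ 1 ∧ ∀ i ≠ k, basisHeight β (u i) = 1) := by
  have ht := h.not_t_w hβ hw
  obtain ⟨Dv, Dy, Du, s, hv, hy, hu, hst, hsz, hs0, hsum, hcount⟩ := h.exists_deficits hβ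
  have hs1 : s ≠ 1 := fun hs => ht (hst.2 hs)
  have hs2 : s ≠ -1 := fun hs => hz (hsz.2 hs)
  have hs : s = 0 := by omega
  subst hs
  simp only [hw, if_true] at hcount
  norm_num at hcount hsum
  have h2 := numNonzero_le_sum Dy
  have h3 := numNonzero_le_sum Du
  have hy0 : numNonzero Dy ≠ 0 := by
    intro h0
    have hysum := sum_eq_zero_of_numNonzero_eq_zero h0
    have k : Fin b := ⟨0, by have := h.two_le_b; omega⟩
    have hu0 : numNonzero Du = 0 := by omega
    obtain ⟨β', hβ', hlt, hne⟩ := hβ.exists_adjacent_height h.smooth (h.u_mem k)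
      ((hu k).2 (eq_zero_of_numNonzero_eq_zero hu0 k))
    have hw' : basisHeight β' w = 1 :=
      hne w h.w_mem (h.label_ne_w (.inr (.inr (.inl k)))) hw
    have ht' := h.not_t_w hβ' hw'
    obtain ⟨Dv', Dy', Du', s', -, hy', hu', hst', -, -, hsum', -⟩ := h.exists_deficits hβ'
    have hs' : s' ≠ 1 := fun hs => ht' (hst'.2 hs)
    have hyz : ∑ j, Dy' j = 0 := Finset.sum_eq_zero fun j _ => by
      rw [← hy']
      refine hne _ (h.y_mem j) ?_ ((hy j).2 (eq_zero_of_numNonzero_eq_zero h0 j))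
      exact h.injective.ne (a₁ := .inr (.inl j)) (a₂ := .inr (.inr (.inl k))) (by simp)
    have huk : Du' k ≠ 0 := fun h0 => hlt.ne ((hu' k).2 h0)
    have hpos := Finset.single_le_sum (f := Du') (fun _ _ => Nat.zero_le _) (Finset.mem_univ k)
    omega
  have hu0 : numNonzero Du ≠ 0 := fun h0 => by
    have := sum_eq_zero_of_numNonzero_eq_zero h0
    omega
  refine ⟨hs0 rfl, fun i => (hv i).2 (eq_zero_of_numNonzero_eq_zero (by omega) i), ?_, ?_⟩
  · simp only [ne_eq, hy]
    exact exists_unique_of_numNonzero_eq_one (by omega)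
  · simp only [ne_eq, hu]
    exact exists_unique_of_numNonzero_eq_one (by omega)

theorem exists_w_not_z (h : IsOneVertexExtension Q v y z t u w) :
    ∃ β, IsFacetBasis Q β ∧ basisHeight β w = 1 ∧ basisHeight β z ≠ 1 := by
  have hn : 0 < n := by have := h.dim; have := h.two_le_a; omega
  obtain ⟨β, hβ, hw⟩ := h.smooth.exists_isFacetBasis_mem hn h.w_mem
  by_cases hz : basisHeight β z = 1
  · obtain ⟨β', hβ', hlt, hne⟩ := hβ.exists_adjacent_height h.smooth h.z_mem hz
    exact ⟨β', hβ', hne w h.w_mem (h.label_ne_w (.inr (.inr (.inr true)))) hw, hlt.ne⟩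
  · exact ⟨β, hβ, hw, hz⟩

/-- The linear relations, read off in one coordinate. -/
theorem coord_relations (h : IsOneVertexExtension Q v y z t u w) (c : (Fin n → ℝ) →ₗ[ℝ] ℝ)
    (j k : Fin b) :
    c t = -c z ∧
    (∑ i, c (v i)) + (∑ i ∈ Finset.univ.erase j, c (y i)) + c (y j) = -((a : ℝ) + b - 1) * c z ∧
    (∑ i ∈ Finset.univ.erase k, c (u i)) + c (u k) =
      c z + (∑ i ∈ Finset.univ.erase j, c (y i)) + c (y j) := by
  have r1 := congrArg c h.sum_v_y
  have r2 := congrArg c h.sum_u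
  have r3 := congrArg c h.z_eq
  simp only [map_add, map_sum, map_smul, map_neg, smul_eq_mul] at r1 r2 r3
  rw [← Finset.add_sum_erase _ (fun i => c (y i)) (Finset.mem_univ j)] at r1 r2
  rw [← Finset.add_sum_erase _ (fun i => c (u i)) (Finset.mem_univ k)] at r2
  refine ⟨by linarith, ?_, by linarith⟩
  rw [r3]
  linarith

/-- In the direction of a vertex `v i` of a facet containing `w` but not `z`, the new vertex of the
adjacent facet is `z`. -/
theorem coord_z_of_v (h : IsOneVertexExtension Q v y z t u w) (hβ : IsFacetBasis Q β)
    (hw : basisHeight β w = 1) (hz : basisHeight β z ≠ 1) {l : Fin n} {i : Fin a}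
    (hl : β l = v i) : β.coord l z = -1 := by
  obtain ⟨β', e, -, hβ', hlt, hcoord, -, -, hkeep, hnew⟩ := hβ.exists_adjacent_vertex h.smooth l
  have hw' := hkeep w h.w_mem (hl ▸ h.label_ne_w (.inl i)) hw
  by_cases hz' : basisHeight β' z = 1
  · rw [hnew z h.z_mem hz hz', hcoord]
  · exact absurd ((h.structure_of_w_not_z hβ' hw' hz').2.1 i) (hl ▸ hlt.ne)

theorem coord_z_nonpos_or (h : IsOneVertexExtension Q v y z t u w) (hβ : IsFacetBasis Q β)
    (hw : basisHeight β w = 1) (hz : basisHeight β z ≠ 1) (l : Fin n) :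
    β.coord l z ≤ 0 ∨ β.coord l z = 1 ∧ β l = w := by
  obtain ⟨-, hv, ⟨j, -, hy⟩, ⟨k, -, hu⟩⟩ := h.structure_of_w_not_z hβ hw hz
  obtain ⟨m, hm⟩ := hβ.coord_int z (h.smooth.1.isLatticePoint h.z_mem) l
  rcases le_or_gt m 0 with hm0 | hm0
  · left; rw [hm]; exact_mod_cast hm0
  right
  have hm1 : (1 : ℝ) ≤ β.coord l z := by rw [hm]; exact_mod_cast hm0
  have ha : (2 : ℝ) ≤ a := by exact_mod_cast h.two_le_a
  have hb : (2 : ℝ) ≤ b := by exact_mod_cast h.two_le_b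
  obtain ⟨r1, r2, r3⟩ := h.coord_relations (β.coord l) j k
  have sv : 0 ≤ ∑ i, β.coord l (v i) :=
    Finset.sum_nonneg fun i _ => hβ.coord_nonneg (h.v_mem i) (hv i) l
  have sy : 0 ≤ ∑ i ∈ Finset.univ.erase j, β.coord l (y i) := Finset.sum_nonneg fun i hi =>
    hβ.coord_nonneg (h.y_mem i) (hy i (Finset.ne_of_mem_erase hi)) l
  have su : 0 ≤ ∑ i ∈ Finset.univ.erase k, β.coord l (u i) := Finset.sum_nonneg fun i hi =>
    hβ.coord_nonneg (h.u_mem i) (hu i (Finset.ne_of_mem_erase hi)) l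
  obtain ⟨β', e, he, hβ', -, hcoord, hnot, he', hkeep, -⟩ := hβ.exists_adjacent_vertex h.smooth l
  rw [h.vertexSet_eq] at he
  rcases he with ⟨i | i | i | i, rfl⟩ | rfl
  · exact absurd (hv i) hnot
  · by_cases hij : i = j
    · subst hij
      change β.coord l (y i) = -1 at hcoord
      nlinarith
    · exact absurd (hy i hij) hnot
  · by_cases hik : i = k
    · subst hik
      change β.coord l (u i) = -1 at hcoord
      nlinarith
    · exact absurd (hu i hik) hnot
  · cases i
    · change β.coord l t = -1 at hcoord
      refine ⟨by linarith, ?_⟩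
      by_contra hne
      exact h.not_t_w hβ' (hkeep w h.w_mem (Ne.symm hne) hw) he'
    · change β.coord l z = -1 at hcoord
      linarith
  · exact absurd hw hnot

theorem elim (h : IsOneVertexExtension Q v y z t u w) : False := by
  obtain ⟨β, hβ, hw, hz⟩ := h.exists_w_not_z
  obtain ⟨hz0, hv, -, -⟩ := h.structure_of_w_not_z hβ hw hz
  obtain ⟨lw, hlw⟩ := hβ.mem_range w h.w_mem hw
  have ha := h.two_le_a
  let i₀ : Fin a := ⟨0, by omega⟩
  let i₁ : Fin a := ⟨1, by omega⟩
  obtain ⟨l₀, hl₀⟩ := hβ.mem_range _ (h.v_mem i₀) (hv i₀)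
  obtain ⟨l₁, hl₁⟩ := hβ.mem_range _ (h.v_mem i₁) (hv i₁)
  have h01 : l₀ ≠ l₁ := fun hl => h.injective.ne (a₁ := .inl i₀) (a₂ := .inl i₁)
    (by simp [i₀, i₁]) (hl₀.symm.trans (hl ▸ hl₁))
  have hw0 : lw ≠ l₀ := fun hl => h.label_ne_w (.inl i₀) (hlw.symm.trans (hl ▸ hl₀))
  have hw1 : lw ≠ l₁ := fun hl => h.label_ne_w (.inl i₁) (hlw.symm.trans (hl ▸ hl₁))
  have hbound : ∀ l, β.coord l z ≤
      (if l = lw then 1 else 0) - (if l = l₀ then 1 else 0) - (if l = l₁ then 1 else 0) := by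
    intro l
    by_cases h0 : l = l₀
    · subst h0
      simp [h.coord_z_of_v hβ hw hz hl₀, hw0.symm, h01, -Module.Basis.coord_apply]
    by_cases h1 : l = l₁
    · subst h1
      simp [h.coord_z_of_v hβ hw hz hl₁, hw1.symm, h01.symm, -Module.Basis.coord_apply]
    rcases h.coord_z_nonpos_or hβ hw hz l with hle | ⟨hone, hl⟩
    · simp only [h0, h1, if_false, sub_zero]
      split_ifs <;> linarith
    · have : l = lw := β.injective (hl.trans hlw.symm)
      rw [hone]
      simp [this, hw0, hw1]
  have hsum := Finset.sum_le_sum fun l (_ : l ∈ Finset.univ) => hbound l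
  rw [← basisHeight_apply, hz0] at hsum
  norm_num [Finset.sum_sub_distrib] at hsum

end IsOneVertexExtension

end Extension

section Removal

variable {n a b : ℕ} {P Q : Set (Fin n → ℝ)} {v : Fin a → Fin n → ℝ} {y : Fin b → Fin n → ℝ}
  {z t : Fin n → ℝ} {u : Fin b → Fin n → ℝ} {w : Fin n → ℝ}

namespace IsolatedRelations

theorem apply_t (h : IsolatedRelations v y z t u) (g : (Fin n → ℝ) →ₗ[ℝ] ℝ) :
    g t = (∑ j, g (y j)) - ∑ j, g (u j) := by
  rw [eq_sub_iff_add_eq, ← map_sum, ← map_sum, ← map_add, h.sum_u]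

theorem apply_z (h : IsolatedRelations v y z t u) (g : (Fin n → ℝ) →ₗ[ℝ] ℝ) :
    g z = -((∑ j, g (y j)) - ∑ j, g (u j)) := by
  rw [h.z_eq, map_neg, h.apply_t]

theorem apply_sum_v_y (h : IsolatedRelations v y z t u) (g : (Fin n → ℝ) →ₗ[ℝ] ℝ) :
    (∑ i, g (v i)) + (∑ j, g (y j)) =
      ((a : ℝ) + b - 1) * ((∑ j, g (y j)) - ∑ j, g (u j)) := by
  rw [← h.apply_t, ← map_sum, ← map_sum, ← map_add, h.sum_v_y, map_smul, smul_eq_mul]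

/-- The relations are the only linear relations between the vertices. -/
theorem exists_functional (h : IsolatedRelations v y z t u) (hP : IsSmoothFano P)
    (hV : vertexSet P = Set.range (vertexLabel v y z t u)) (gv : Fin a → ℝ) (gy gu : Fin b → ℝ)
    (hsum : (∑ i, gv i) + (∑ j, gy j) = ((a : ℝ) + b - 1) * ((∑ j, gy j) - ∑ j, gu j)) :
    ∃ g : (Fin n → ℝ) →ₗ[ℝ] ℝ,
      (∀ i, g (v i) = gv i) ∧ (∀ j, g (y j) = gy j) ∧ ∀ j, g (u j) = gu j := by
  let ev : ((Fin n → ℝ) →ₗ[ℝ] ℝ) →ₗ[ℝ] Fin a ⊕ Fin b ⊕ Fin b → ℝ :=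
    LinearMap.pi fun l => LinearMap.applyₗ (Sum.elim v (Sum.elim y u) l)
  let rel : (Fin a ⊕ Fin b ⊕ Fin b → ℝ) →ₗ[ℝ] ℝ :=
    (∑ i, LinearMap.proj (.inl i)) + (∑ j, LinearMap.proj (.inr (.inl j))) -
      ((a : ℝ) + b - 1) •
        ((∑ j, LinearMap.proj (.inr (.inl j))) - ∑ j, LinearMap.proj (.inr (.inr j)))
  have hrel : ∀ x, rel x = (∑ i, x (.inl i)) + (∑ j, x (.inr (.inl j))) - ((a : ℝ) + b - 1) *
      ((∑ j, x (.inr (.inl j))) - ∑ j, x (.inr (.inr j))) := fun x => by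
    simp [rel, LinearMap.sum_apply]
  have hle : LinearMap.range ev ≤ LinearMap.ker rel := by
    rintro _ ⟨g, rfl⟩
    rw [LinearMap.mem_ker, hrel, sub_eq_zero]
    exact h.apply_sum_v_y g
  have hinj : Function.Injective ev := by
    rw [injective_iff_map_eq_zero]
    intro g hg
    have hgl : ∀ l, g (Sum.elim v (Sum.elim y u) l) = 0 := fun l => congrFun hg l
    have hgv : ∀ i, g (v i) = 0 := fun i => hgl (.inl i)
    have hgy : ∀ j, g (y j) = 0 := fun j => hgl (.inr (.inl j))
    have hgu : ∀ j, g (u j) = 0 := fun j => hgl (.inr (.inr j))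
    by_contra hg0
    obtain ⟨x, hx, hpos⟩ := hP.exists_vertex_pos hg0
    rw [hV] at hx
    obtain ⟨i | j | j | c, rfl⟩ := hx
    · exact hpos.ne' (hgv i)
    · exact hpos.ne' (hgy j)
    · exact hpos.ne' (hgu j)
    · have ht := h.apply_t g
      have hz := h.apply_z g
      simp only [hgy, hgu, Finset.sum_const_zero, sub_zero, neg_zero] at ht hz
      cases c
      · exact hpos.ne' ht
      · exact hpos.ne' hz
  have hker : Module.finrank ℝ (LinearMap.ker rel) = n := by
    have hne : rel ≠ 0 := fun h0 => by
      have hi : 0 < a := by have := h.two_le_a; omega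
      have := LinearMap.congr_fun h0 (Pi.single (.inl ⟨0, hi⟩) 1)
      simp [hrel, Pi.single_apply] at this
    have h1 := rel.finrank_range_add_finrank_ker
    rw [LinearMap.range_eq_top.2 (LinearMap.surjective hne), finrank_top] at h1
    simp only [Module.finrank_self, Module.finrank_fintype_fun_eq_card, Fintype.card_sum,
      Fintype.card_fin] at h1
    have := h.dim
    omega
  have hrange : LinearMap.range ev = LinearMap.ker rel := by
    refine Submodule.eq_of_le_of_finrank_eq hle ?_
    rw [LinearMap.finrank_range_of_inj hinj, hker]
    simp
  have hmem : Sum.elim gv (Sum.elim gy gu) ∈ LinearMap.range ev := by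
    rw [hrange, LinearMap.mem_ker, hrel, sub_eq_zero]
    exact hsum
  obtain ⟨g, hg⟩ := hmem
  exact ⟨g, fun i => congrFun hg (.inl i), fun j => congrFun hg (.inr (.inl j)),
    fun j => congrFun hg (.inr (.inr j))⟩

/-- Every labelled vertex other than `t` is needed to have the origin in the interior. -/
theorem exists_functional_nonpos (h : IsolatedRelations v y z t u) (hP : IsSmoothFano P)
    (hV : vertexSet P = Set.range (vertexLabel v y z t u)) (l : Fin a ⊕ Fin b ⊕ Fin b ⊕ Bool)
    (hl : l ≠ .inr (.inr (.inr false))) :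
    ∃ g : (Fin n → ℝ) →ₗ[ℝ] ℝ, g ≠ 0 ∧ ∀ k ≠ l, g (vertexLabel v y z t u k) ≤ 0 := by
  have : Nontrivial (Fin a) := Fin.nontrivial_iff_two_le.2 h.two_le_a
  have : Nontrivial (Fin b) := Fin.nontrivial_iff_two_le.2 h.two_le_b
  rcases l with i | i | i | _ | _
  · obtain ⟨i', hi'⟩ := exists_ne i
    obtain ⟨g, hv, hy, hu⟩ := h.exists_functional hP hV
      (fun k => (if k = i then 1 else 0) - (if k = i' then 1 else 0)) 0 0
      (by simp [Finset.sum_sub_distrib])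
    have ht := h.apply_t g
    have hz := h.apply_z g
    simp only [hy, hu, Pi.zero_apply, Finset.sum_const_zero, sub_zero, neg_zero] at ht hz
    refine ⟨g, fun h0 => ?_, ?_⟩
    · simpa [h0, hi'.symm] using hv i
    rintro (k | k | k | _ | _) hk
    · have hk : k ≠ i := fun hki => hk (by rw [hki])
      simp only [vertexLabel, Sum.elim_inl, hv, hk, if_false]
      split_ifs <;> norm_num
    · exact (hy k).le
    · exact (hu k).le
    · exact ht.le
    · exact hz.le
  · obtain ⟨i', hi'⟩ := exists_ne i
    obtain ⟨g, hv, hy, hu⟩ := h.exists_functional hP hV 0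
      (fun k => (if k = i then 1 else 0) - (if k = i' then 1 else 0)) 0
      (by simp [Finset.sum_sub_distrib])
    have ht := h.apply_t g
    have hz := h.apply_z g
    simp [hy, hu, Finset.sum_sub_distrib] at ht hz
    refine ⟨g, fun h0 => ?_, ?_⟩
    · simpa [h0, hi'.symm] using hy i
    rintro (k | k | k | _ | _) hk
    · exact (hv k).le
    · have hk : k ≠ i := fun hki => hk (by rw [hki])
      simp only [vertexLabel, Sum.elim_inl, Sum.elim_inr, hy, hk, if_false]
      split_ifs <;> norm_num
    · exact (hu k).le
    · exact ht.le
    · exact hz.le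
  · obtain ⟨i', hi'⟩ := exists_ne i
    obtain ⟨g, hv, hy, hu⟩ := h.exists_functional hP hV 0 0
      (fun k => (if k = i then 1 else 0) - (if k = i' then 1 else 0))
      (by simp [Finset.sum_sub_distrib])
    have ht := h.apply_t g
    have hz := h.apply_z g
    simp [hy, hu, Finset.sum_sub_distrib] at ht hz
    refine ⟨g, fun h0 => ?_, ?_⟩
    · simpa [h0, hi'.symm] using hu i
    rintro (k | k | k | _ | _) hk
    · exact (hv k).le
    · exact (hy k).le
    · have hk : k ≠ i := fun hki => hk (by rw [hki])
      simp only [vertexLabel, Sum.elim_inl, Sum.elim_inr, hu, hk, if_false]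
      split_ifs <;> norm_num
    · exact ht.le
    · exact hz.le
  · exact absurd rfl hl
  · obtain ⟨i⟩ : Nonempty (Fin a) := inferInstance
    obtain ⟨j⟩ : Nonempty (Fin b) := inferInstance
    have ha : (2 : ℝ) ≤ a := by exact_mod_cast h.two_le_a
    have hb : (2 : ℝ) ≤ b := by exact_mod_cast h.two_le_b
    obtain ⟨g, hv, hy, hu⟩ := h.exists_functional hP hV
      (fun k => if k = i then -((a : ℝ) + b - 2) else 0) (fun k => if k = j then -1 else 0) 0
      (by simp; ring)
    have ht := h.apply_t g
    simp only [hy, hu, Finset.sum_ite_eq', Finset.mem_univ, if_true, Pi.zero_apply,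
      Finset.sum_const_zero, sub_zero] at ht
    refine ⟨g, fun h0 => ?_, ?_⟩
    · norm_num [h0] at ht
    rintro (k | k | k | _ | _) hk
    · simp only [vertexLabel, Sum.elim_inl, hv]
      split_ifs <;> linarith
    · simp only [vertexLabel, Sum.elim_inl, Sum.elim_inr, hy]
      split_ifs <;> norm_num
    · exact (hu k).le
    · exact ht.le.trans (by norm_num)
    · exact absurd rfl hk

/-- No vertex of `P` can be removed. -/
theorem vertexSet_ne_union_singleton (h : IsolatedRelations v y z t u) (hP : IsSmoothFano P)
    (hV : vertexSet P = Set.range (vertexLabel v y z t u)) (hQ : IsSmoothFano Q)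
    (hw : w ∉ vertexSet Q) : vertexSet P ≠ vertexSet Q ∪ {w} := by
  intro hPQ
  rw [hV] at hPQ
  obtain ⟨l, rfl⟩ : w ∈ Set.range (vertexLabel v y z t u) := hPQ ▸ Or.inr rfl
  have hmem : ∀ k ≠ l, vertexLabel v y z t u k ∈ vertexSet Q := fun k hk => by
    have : vertexLabel v y z t u k ∈ vertexSet Q ∪ {vertexLabel v y z t u l} :=
      hPQ ▸ Set.mem_range_self k
    exact this.resolve_right fun he => hk (h.injective he)
  by_cases hl : l = .inr (.inr (.inr false))
  · subst hl
    have ht0 : t ≠ 0 := fun h0 => by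
      have : z = t := by rw [h.z_eq, h0, neg_zero]
      exact absurd (h.injective (a₁ := .inr (.inr (.inr true))) (a₂ := .inr (.inr (.inr false))) this)
        (by simp)
    have htP : t ∈ vertexSet P := hV ▸ ⟨.inr (.inr (.inr false)), rfl⟩
    have ha := h.two_le_a
    have hb := h.two_le_b
    have hdim := h.dim
    obtain ⟨β, hβ, -, hrange⟩ :=
      hQ.exists_height_of_isLatticePoint (by omega) (hP.1.isLatticePoint htP) ht0
    have hv : ∑ i, basisHeight β (v i) ≤ a := by
      simpa [vertexLabel] using Finset.sum_le_sum fun i (_ : i ∈ Finset.univ) =>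
        hβ.height_le _ (hmem (.inl i) (by simp))
    have hy : ∑ j, basisHeight β (y j) ≤ b := by
      simpa [vertexLabel] using Finset.sum_le_sum fun j (_ : j ∈ Finset.univ) =>
        hβ.height_le _ (hmem (.inr (.inl j)) (by simp))
    have hsum := congrArg (basisHeight β) h.sum_v_y
    simp only [map_add, map_sum, map_smul, smul_eq_mul] at hsum
    have ha' : (2 : ℝ) ≤ a := by exact_mod_cast ha
    have hb' : (2 : ℝ) ≤ b := by exact_mod_cast hb
    obtain ⟨i, hi⟩ := hrange (by nlinarith)
    refine hw ?_
    change t ∈ vertexSet Q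
    exact hi ▸ hβ.mem i
  · obtain ⟨g, hg0, hg⟩ := h.exists_functional_nonpos hP hV l hl
    obtain ⟨x, hx, hpos⟩ := hQ.exists_vertex_pos hg0
    obtain ⟨k, rfl⟩ : x ∈ Set.range (vertexLabel v y z t u) := hPQ ▸ Or.inl hx
    refine (hg k ?_).not_gt hpos
    rintro rfl
    exact hw hx

end IsolatedRelations

end Removal

section Transfer

variable {n a b : ℕ} {P Q R : Set (Fin n → ℝ)}

theorem isLatticePoint_apply_zero {φ : (Fin n → ℝ) → Fin n → ℝ}
    (hlat : φ '' {x | IsLatticePoint x} = {x | IsLatticePoint x}) : IsLatticePoint (φ 0) := by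
  have : φ 0 ∈ φ '' {x | IsLatticePoint x} := Set.mem_image_of_mem _ fun _ => ⟨0, by simp⟩
  rwa [hlat] at this

theorem UnimodularEquiv.exists_affineEquiv (h : UnimodularEquiv P Q) :
    ∃ φ : (Fin n → ℝ) ≃ᵃ[ℝ] (Fin n → ℝ),
      φ '' {x | IsLatticePoint x} = {x | IsLatticePoint x} ∧ φ '' P = Q := by
  obtain ⟨φ, hlat, hφ⟩ := h
  have h0 := isLatticePoint_apply_zero hlat
  have hsurj : Function.Surjective φ.linear := by
    rw [← LinearMap.range_eq_top, eq_top_iff, ← (Pi.basisFun ℝ (Fin n)).span_eq,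
      Submodule.span_le]
    rintro _ ⟨i, rfl⟩
    have hi : Pi.basisFun ℝ (Fin n) i + φ 0 ∈ {x : Fin n → ℝ | IsLatticePoint x} := fun j => by
      obtain ⟨m, hm⟩ := h0 j
      by_cases hji : j = i
      · exact ⟨1 + m, by simp [← hm, hji]⟩
      · exact ⟨m, by simp [hm, hji]⟩
    rw [← hlat] at hi
    obtain ⟨x, -, hx⟩ := hi
    refine ⟨x, ?_⟩
    have := φ.linearMap_vsub x 0
    simp only [vsub_eq_sub, sub_zero] at this
    rw [this, hx, add_sub_cancel_right]
  have hbij : Function.Bijective φ :=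
    φ.linear_bijective_iff.1 ⟨LinearMap.injective_iff_surjective.2 hsurj, hsurj⟩
  exact ⟨AffineEquiv.ofBijective hbij, by simpa using hlat, by simpa using hφ⟩

theorem UnimodularEquiv.symm (h : UnimodularEquiv P Q) : UnimodularEquiv Q P := by
  obtain ⟨φ, hlat, rfl⟩ := h.exists_affineEquiv
  have himage : ∀ S, φ.symm '' (φ '' S) = S := fun S => by simp [Set.image_image]
  refine ⟨φ.symm, ?_, himage P⟩
  conv_lhs => rw [← hlat]
  exact himage _

theorem UnimodularEquiv.trans (h : UnimodularEquiv P Q) (h' : UnimodularEquiv Q R) :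
    UnimodularEquiv P R := by
  obtain ⟨φ, hlat, rfl⟩ := h
  obtain ⟨ψ, hlat', rfl⟩ := h'
  exact ⟨ψ.comp φ, by rw [AffineMap.coe_comp, Set.image_comp, hlat, hlat'],
    by rw [AffineMap.coe_comp, Set.image_comp]⟩

/-- A unimodular equivalence of smooth Fano polytopes is linear. -/
theorem UnimodularEquiv.exists_linearEquiv (h : UnimodularEquiv P Q) (hP : IsSmoothFano P)
    (hQ : IsSmoothFano Q) (hn : 0 < n) :
    ∃ f : (Fin n → ℝ) ≃ₗ[ℝ] (Fin n → ℝ), vertexSet Q = f '' vertexSet P := by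
  obtain ⟨φ, hlat, rfl⟩ := h.exists_affineEquiv
  have h0 : φ 0 = 0 := by
    refine hQ.eq_zero_of_mem_interior hn (isLatticePoint_apply_zero hlat) ?_
    exact ((AffineEquiv.toContinuousAffineEquiv φ).toHomeomorph.image_interior P).le
      (Set.mem_image_of_mem _ hP.2.1)
  have hlin : ⇑φ = φ.linear := funext fun x => by
    have := (φ : (Fin n → ℝ) →ᵃ[ℝ] (Fin n → ℝ)).linearMap_vsub x 0
    simpa [h0] using this.symm
  refine ⟨φ.linear, ?_⟩
  rw [hlin]
  exact (image_extremePoints φ.linear P).symm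

theorem comp_vertexLabel (f : (Fin n → ℝ) → Fin n → ℝ) (v : Fin a → Fin n → ℝ)
    (y : Fin b → Fin n → ℝ) (z t : Fin n → ℝ) (u : Fin b → Fin n → ℝ) :
    f ∘ vertexLabel v y z t u = vertexLabel (f ∘ v) (f ∘ y) (f z) (f t) (f ∘ u) := by
  ext (i | j | j | _ | _) <;> rfl

theorem IsolatedRelations.map {v : Fin a → Fin n → ℝ} {y : Fin b → Fin n → ℝ} {z t : Fin n → ℝ}
    {u : Fin b → Fin n → ℝ} (h : IsolatedRelations v y z t u)
    (f : (Fin n → ℝ) ≃ₗ[ℝ] (Fin n → ℝ)) :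
    IsolatedRelations (f ∘ v) (f ∘ y) (f z) (f t) (f ∘ u) where
  two_le_a := h.two_le_a
  two_le_b := h.two_le_b
  dim := h.dim
  injective := by
    rw [← comp_vertexLabel]
    exact f.injective.comp h.injective
  sum_v_y := by simp only [Function.comp_apply, ← map_sum, ← map_add, h.sum_v_y, map_smul]
  z_eq := by rw [h.z_eq, map_neg]
  sum_u := by simp only [Function.comp_apply, ← map_sum, ← map_add, h.sum_u]

/-- `P` is a set whose vertices satisfy the relations for some labelling. -/
def HasIsolatedRelations (a b : ℕ) (P : Set (Fin n → ℝ)) : Prop :=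
  ∃ (v : Fin a → Fin n → ℝ) (y : Fin b → Fin n → ℝ) (z t : Fin n → ℝ) (u : Fin b → Fin n → ℝ),
    IsolatedRelations v y z t u ∧ vertexSet P = Set.range (vertexLabel v y z t u)

theorem HasIsolatedRelations.of_unimodularEquiv (h : HasIsolatedRelations a b P)
    (hPQ : UnimodularEquiv P Q) (hP : IsSmoothFano P) (hQ : IsSmoothFano Q) :
    HasIsolatedRelations a b Q := by
  obtain ⟨v, y, z, t, u, h, hV⟩ := h
  have hn : 0 < n := by have := h.dim; have := h.two_le_a; omega
  obtain ⟨f, hf⟩ := hPQ.exists_linearEquiv hP hQ hn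
  exact ⟨f ∘ v, f ∘ y, f z, f t, f ∘ u, h.map f, by
    rw [hf, hV, ← comp_vertexLabel, Set.range_comp]⟩

theorem HasIsolatedRelations.not_iStep (h : HasIsolatedRelations a b P) (hP : IsSmoothFano P)
    (hQ : IsSmoothFano Q) : ¬IStep Q P := by
  obtain ⟨v, y, z, t, u, h, hV⟩ := h
  rintro (⟨w, -, hw, hPQ⟩ | ⟨w, -, hw, hQP⟩)
  · exact h.vertexSet_ne_union_singleton hP hV hQ hw hPQ
  · rw [hV] at hw hQP
    exact IsOneVertexExtension.elim ⟨h, hQ, hw, hQP⟩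

theorem HasIsolatedStructure.hasIsolatedRelations {v : Fin a → Fin n → ℝ}
    {y : Fin b → Fin n → ℝ} {z t : Fin n → ℝ} {u : Fin b → Fin n → ℝ}
    (h : HasIsolatedStructure P a b v y z t u) (hcard : (vertexSet P).ncard = n + 3)
    (ha : 2 ≤ a) (hb : 2 ≤ b) (hn : n = a + 2 * b - 1) : HasIsolatedRelations a b P := by
  obtain ⟨hV, -, hvy, -, hzt, htu, -⟩ := h
  have hV' : vertexSet P = Set.range (vertexLabel v y z t u) := by
    rw [hV, vertexLabel, Set.Sum.elim_range, Set.Sum.elim_range, Set.Sum.elim_range]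
    ext x
    simp only [Set.mem_union, Set.mem_insert_iff, Set.mem_singleton_iff, Set.mem_range,
      Bool.exists_bool, cond_false, cond_true, eq_comm (a := x)]
    tauto
  refine ⟨v, y, z, t, u, ⟨ha, hb, by omega, ?_, hvy, eq_neg_of_add_eq_zero_left hzt, htu⟩, hV'⟩
  rw [← Set.injOn_univ]
  refine Set.injOn_of_ncard_image_eq ?_
  rw [Set.image_univ, ← hV', hcard, Set.ncard_univ]
  simp
  omega

end Transfer

/-- A smooth Fano `n`-polytope with `n+3` vertices whose
primitive relations are exactly the five relations of Theorem `pic3cha`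
(for some `a ≥ 2`, `b ≥ 2` with `n = a + 2b - 1` and some labeling of the
vertices) is I-isolated. -/
theorem I_isolated_of_structure {n : ℕ} (P : Set (Fin n → ℝ))
    (hP : IsSmoothFano P) (hcard : (vertexSet P).ncard = n + 3)
    (a b : ℕ) (ha : 2 ≤ a) (hb : 2 ≤ b) (hn : n = a + 2 * b - 1)
    (v : Fin a → Fin n → ℝ) (y : Fin b → Fin n → ℝ) (z t : Fin n → ℝ)
    (u : Fin b → Fin n → ℝ)
    (hstr : HasIsolatedStructure P a b v y z t u) :
    IIsolated P := by
  rintro Q - ⟨k, c, hc, hQ, hPc, hstep⟩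
  have hlast := (hstr.hasIsolatedRelations hcard ha hb hn).of_unimodularEquiv hPc hP
    (hc (Fin.last k))
  cases k with
  | zero => exact hQ.trans hPc.symm
  | succ k => exact absurd (hstep (Fin.last k)) (hlast.not_iStep (hc _) (hc _))
end

section
/- For all integers a ≥ 2 and b ≥ 2, the polytope P(a,b) is a smooth Fano polytope of dimension n = a + 2b − 1 with n + 3 vertices {v_1, …, v_a, y_1, …, y_b, z, t, u_1, …, u_b}, and its primitive relations are exactly: v_1+⋯+v_a+y_1+⋯+y_b = (a+b−1)t; y_1+⋯+y_b+z = u_1+⋯+u_b; z+t = 0; t+u_1+⋯+u_b = y_1+⋯+y_b; and u_1+⋯+u_b+v_1+⋯+v_a = (a+b−2)t. -/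
namespace Pab

/-! The concrete polytope `P(a,b)` of dimension `n = a + 2b - 1`, from the
proof of Theorem `pic3cha` (coordinates are `0`-based: the paper's `e_q` is
the standard basis vector at index `q - 1`). -/

/-- `v_i = e_i` for `1 ≤ i ≤ a-1`, and
`v_a = -e_1 - ⋯ - e_{a+2b-2} + (a+b-1) e_{a+2b-1}`. -/
def v (a b : ℕ) (i : Fin a) : Fin (a + 2 * b - 1) → ℝ :=
  if i.val < a - 1 then fun q => if q.val = i.val then 1 else 0
  else fun q => if q.val = a + 2 * b - 2 then ((a + b - 1 : ℕ) : ℝ) else -1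

/-- `y_j = e_{a-1+j}` for `1 ≤ j ≤ b-1`, and `y_b = e_{a+b-1} + ⋯ + e_{a+2b-2}`. -/
def y (a b : ℕ) (j : Fin b) : Fin (a + 2 * b - 1) → ℝ :=
  if j.val < b - 1 then fun q => if q.val = a - 1 + j.val then 1 else 0
  else fun q => if a + b - 2 ≤ q.val ∧ q.val ≤ a + 2 * b - 3 then 1 else 0

/-- `z = -e_{a+2b-1}`. -/
def z (a b : ℕ) : Fin (a + 2 * b - 1) → ℝ :=
  fun q => if q.val = a + 2 * b - 2 then -1 else 0

/-- `t = e_{a+2b-1}`. -/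
def t (a b : ℕ) : Fin (a + 2 * b - 1) → ℝ :=
  fun q => if q.val = a + 2 * b - 2 then 1 else 0

/-- `u_j = e_{a+b-1+j}` for `1 ≤ j ≤ b-1`, and
`u_b = e_a + ⋯ + e_{a+b-1} - e_{a+2b-1}`. -/
def u (a b : ℕ) (j : Fin b) : Fin (a + 2 * b - 1) → ℝ :=
  if j.val < b - 1 then fun q => if q.val = a + b - 1 + j.val then 1 else 0
  else fun q => if a - 1 ≤ q.val ∧ q.val ≤ a + b - 2 then 1
    else if q.val = a + 2 * b - 2 then -1 else 0

/-- The polytope `P(a,b)`. -/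
def P (a b : ℕ) : Set (Fin (a + 2 * b - 1) → ℝ) :=
  convexHull ℝ
    (Set.range (v a b) ∪ Set.range (y a b) ∪ {z a b, t a b} ∪ Set.range (u a b))

end Pab

namespace Pab

/-- The labels of the vertices of `P(a,b)`, in the order `v`, `y`, `z`, `t`, `u`. -/
abbrev Label (a b : ℕ) : Type := Fin a ⊕ Fin b ⊕ Unit ⊕ Unit ⊕ Fin b

/-- The vertex of `P(a,b)` with a given label. -/
def vertex (a b : ℕ) : Label a b → Fin (a + 2 * b - 1) → ℝ :=
  Sum.elim (v a b) (Sum.elim (y a b)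
    (Sum.elim (fun _ => z a b) (Sum.elim (fun _ => t a b) (u a b))))

theorem range_vertex (a b : ℕ) : Set.range (vertex a b) =
    Set.range (v a b) ∪ Set.range (y a b) ∪ {z a b, t a b} ∪ Set.range (u a b) := by
  ext x
  simp only [vertex, Set.mem_range, Sum.exists, Sum.elim_inl, Sum.elim_inr, Set.mem_union,
    Set.mem_insert_iff, Set.mem_singleton_iff, exists_const, eq_comm (a := x)]
  tauto

theorem P_eq (a b : ℕ) : P a b = convexHull ℝ (Set.range (vertex a b)) := by
  rw [range_vertex, P]

theorem vertex_isLatticePoint {a b : ℕ} (i : Label a b) : IsLatticePoint (vertex a b i) := by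
  intro q
  have key : ∀ (c : Prop) [Decidable c] (x y : ℝ), (∃ m : ℤ, x = m) → (∃ m : ℤ, y = m) →
      ∃ m : ℤ, (if c then x else y) = m := by
    intro c _ x y hx hy
    split_ifs <;> assumption
  have h0 : ∃ m : ℤ, (0 : ℝ) = m := ⟨0, by simp⟩
  have h1 : ∃ m : ℤ, (1 : ℝ) = m := ⟨1, by simp⟩
  have h2 : ∃ m : ℤ, (-1 : ℝ) = m := ⟨-1, by simp⟩
  have h3 : ∃ m : ℤ, ((a + b - 1 : ℕ) : ℝ) = m := ⟨(a + b - 1 : ℕ), by simp⟩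
  rcases i with i | j | j | j | j <;> simp only [vertex, Sum.elim_inl, Sum.elim_inr]
  · unfold v; split_ifs <;> apply key <;> assumption
  · unfold y; split_ifs <;> apply key <;> assumption
  · apply key <;> assumption
  · apply key <;> assumption
  · unfold u; split_ifs
    · apply key <;> assumption
    · exact key _ _ _ h1 (key _ _ _ h2 h0)

theorem sum_ite_eq_add (m c x : ℕ) :
    ∑ i : Fin m, (if x = c + i.val then (1 : ℝ) else 0) = if c ≤ x ∧ x < c + m then 1 else 0 := by
  split_ifs with h
  · rw [Finset.sum_eq_single (⟨x - c, by omega⟩ : Fin m)]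
    · rw [if_pos]; simp only; omega
    · intro i _ hi
      rw [if_neg]
      contrapose! hi
      ext; simp only; omega
    · simp
  · refine Finset.sum_eq_zero fun i _ => if_neg ?_
    have := i.isLt
    omega

theorem sum_v_apply {a b : ℕ} (ha : 2 ≤ a) (hb : 2 ≤ b) (q : Fin (a + 2 * b - 1)) :
    ∑ i, v a b i q = if q.val < a - 1 then 0
      else if q.val = a + 2 * b - 2 then ((a + b - 1 : ℕ) : ℝ) else -1 := by
  obtain ⟨a, rfl⟩ : ∃ a', a = a' + 1 := ⟨a - 1, by omega⟩
  have h := sum_ite_eq_add a 0 q.val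
  simp only [zero_add] at h
  rw [Fin.sum_univ_castSucc]
  simp only [v, Fin.val_castSucc, Fin.val_last, add_tsub_cancel_right, Fin.is_lt, if_true,
    lt_irrefl, if_false, h]
  split_ifs <;> first | omega | simp

theorem sum_y_apply {a b : ℕ} (ha : 2 ≤ a) (hb : 2 ≤ b) (q : Fin (a + 2 * b - 1)) :
    ∑ j, y a b j q = if a - 1 ≤ q.val ∧ q.val ≤ a + 2 * b - 3 then 1 else 0 := by
  obtain ⟨b, rfl⟩ : ∃ b', b = b' + 1 := ⟨b - 1, by omega⟩
  have h := sum_ite_eq_add b (a - 1) q.val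
  rw [Fin.sum_univ_castSucc]
  simp only [y, Fin.val_castSucc, Fin.val_last, add_tsub_cancel_right, Fin.is_lt, if_true,
    lt_irrefl, if_false, h]
  split_ifs <;> first | omega | simp

theorem sum_u_apply {a b : ℕ} (ha : 2 ≤ a) (hb : 2 ≤ b) (q : Fin (a + 2 * b - 1)) :
    ∑ j, u a b j q = if a - 1 ≤ q.val ∧ q.val ≤ a + 2 * b - 3 then 1
      else if q.val = a + 2 * b - 2 then -1 else 0 := by
  obtain ⟨b, rfl⟩ : ∃ b', b = b' + 1 := ⟨b - 1, by omega⟩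
  have h := sum_ite_eq_add b (a + (b + 1) - 1) q.val
  rw [Fin.sum_univ_castSucc]
  simp only [u, Fin.val_castSucc, Fin.val_last, add_tsub_cancel_right, Fin.is_lt, if_true,
    lt_irrefl, if_false, h]
  split_ifs <;> first | omega | simp

theorem sum_v_add_sum_y {a b : ℕ} (ha : 2 ≤ a) (hb : 2 ≤ b) :
    ∑ i, v a b i + ∑ j, y a b j = (a + b - 1 : ℕ) • t a b := by
  ext q
  simp only [Pi.add_apply, Finset.sum_apply, sum_v_apply ha hb, sum_y_apply ha hb, Pi.smul_apply, t,
    nsmul_eq_mul]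
  have := q.isLt
  split_ifs <;> first | omega | simp

theorem sum_y_add_z {a b : ℕ} (ha : 2 ≤ a) (hb : 2 ≤ b) :
    ∑ j, y a b j + z a b = ∑ j, u a b j := by
  ext q
  simp only [Pi.add_apply, Finset.sum_apply, sum_u_apply ha hb, sum_y_apply ha hb, z]
  have := q.isLt
  split_ifs <;> first | omega | simp

theorem z_add_t (a b : ℕ) : z a b + t a b = 0 := by
  ext q
  simp only [Pi.add_apply, z, t, Pi.zero_apply]
  split_ifs <;> simp

theorem mem_of_sum_mem {ι M : Type*} [Fintype ι] [AddCommGroup M] {N : AddSubgroup M} {f : ι → M}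
    (hs : ∑ i, f i ∈ N) (i₀ : ι) (h : ∀ i, i ≠ i₀ → f i ∈ N) : f i₀ ∈ N := by
  classical
  rw [← Finset.add_sum_erase _ _ (Finset.mem_univ i₀)] at hs
  exact (N.add_mem_cancel_right
    (N.sum_mem fun i hi => h i (Finset.ne_of_mem_erase hi))).1 hs

theorem single_mem_of_vertex_mem {a b : ℕ} (ha : 2 ≤ a) (hb : 2 ≤ b)
    {N : AddSubgroup (Fin (a + 2 * b - 1) → ℝ)} (hN : ∀ i, vertex a b i ∈ N)
    (q : Fin (a + 2 * b - 1)) : (Pi.single q 1 : Fin (a + 2 * b - 1) → ℝ) ∈ N := by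
  have hv (i : Fin a) : v a b i ∈ N := hN (.inl i)
  have hy (j : Fin b) : y a b j ∈ N := hN (.inr (.inl j))
  have ht : t a b ∈ N := hN (.inr (.inr (.inr (.inl ()))))
  have hu (j : Fin b) : u a b j ∈ N := hN (.inr (.inr (.inr (.inr j))))
  have main : ∀ q : Fin (a + 2 * b - 1), q.val ≠ a + b - 2 →
      (Pi.single q 1 : Fin (a + 2 * b - 1) → ℝ) ∈ N := by
    intro q hq
    have hlt := q.isLt
    rcases lt_or_ge q.val (a - 1) with h1 | h1
    · convert hv ⟨q, by omega⟩ using 1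
      ext r
      simp [v, h1, Pi.single_apply, Fin.ext_iff]
    rcases lt_or_ge q.val (a + b - 2) with h2 | h2
    · convert hy ⟨q - (a - 1), by omega⟩ using 1
      ext r
      have h3 : q.val - (a - 1) < b - 1 := by omega
      simp [y, h3, Pi.single_apply, Fin.ext_iff, h1]
    rcases lt_or_ge q.val (a + 2 * b - 2) with h3 | h3
    · convert hu ⟨q - (a + b - 1), by omega⟩ using 1
      ext r
      have h4 : q.val - (a + b - 1) < b - 1 := by omega
      have h5 : a + b - 1 + (q.val - (a + b - 1)) = q.val := by omega
      simp [u, h4, Pi.single_apply, Fin.ext_iff, h5]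
    · convert ht using 1
      ext r
      have h4 : q.val = a + 2 * b - 2 := by omega
      simp [t, Pi.single_apply, Fin.ext_iff, h4]
  by_cases hq : q.val = a + b - 2
  · have hlast := hy ⟨b - 1, by omega⟩
    rw [pi_eq_sum_univ' (y a b ⟨b - 1, by omega⟩)] at hlast
    have hcoord (r : Fin (a + 2 * b - 1)) : y a b ⟨b - 1, by omega⟩ r =
        if a + b - 2 ≤ r.val ∧ r.val ≤ a + 2 * b - 3 then 1 else 0 := by simp [y]
    have := mem_of_sum_mem hlast q fun r hr => by
      rw [hcoord]
      split_ifs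
      · convert main r fun h => hr (Fin.ext (h.trans hq.symm)) using 1
        ext s
        simp [Pi.single_apply, eq_comm]
      · simp
    convert this using 1
    ext s
    rw [hcoord, if_pos (by omega)]
    simp [Pi.single_apply, eq_comm]
  · exact main q hq

/-- The five blocks `v`, `y`, `z`, `t`, `u` of labels, in cyclic order. -/
def block {a b : ℕ} : Label a b → Fin 5 :=
  Sum.elim (fun _ => 0) (Sum.elim (fun _ => 1)
    (Sum.elim (fun _ => 2) (Sum.elim (fun _ => 3) (fun _ => 4))))

/-- The union of two cyclically consecutive blocks of labels. -/
def consecutive (a b : ℕ) (k : Fin 5) : Set (Label a b) := {i | block i = k ∨ block i = k + 1}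

theorem forall_not_consecutive_subset {a b : ℕ} {T : Set (Label a b)} :
    (∀ k, ¬ consecutive a b k ⊆ T) ↔
      ¬ ((∀ i, .inl i ∈ T) ∧ ∀ j, .inr (.inl j) ∈ T) ∧
      ¬ ((∀ j, .inr (.inl j) ∈ T) ∧ .inr (.inr (.inl ())) ∈ T) ∧
      ¬ (.inr (.inr (.inl ())) ∈ T ∧ .inr (.inr (.inr (.inl ()))) ∈ T) ∧
      ¬ (.inr (.inr (.inr (.inl ()))) ∈ T ∧ ∀ j, .inr (.inr (.inr (.inr j))) ∈ T) ∧
      ¬ ((∀ j, .inr (.inr (.inr (.inr j))) ∈ T) ∧ ∀ i, .inl i ∈ T) := by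
  have key (k : Fin 5) : consecutive a b k ⊆ T ↔
      (∀ i, block i = k → i ∈ T) ∧ ∀ i, block i = k + 1 → i ∈ T := by
    simp only [consecutive, Set.subset_def, Set.mem_ofPred, or_imp, forall_and]
  have h5 (p : Fin 5 → Prop) : (∀ k, p k) ↔ p 0 ∧ p 1 ∧ p 2 ∧ p 3 ∧ p 4 := by
    simp [Fin.forall_fin_succ]
  have h0 : (∀ i : Label a b, block i = 0 → i ∈ T) ↔ ∀ i, .inl i ∈ T := by simp [block]
  have h1 : (∀ i : Label a b, block i = 1 → i ∈ T) ↔ ∀ j, .inr (.inl j) ∈ T := by simp [block]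
  have h2 : (∀ i : Label a b, block i = 2 → i ∈ T) ↔ .inr (.inr (.inl ())) ∈ T := by
    simp [block, Unique.forall_iff]
  have h3 : (∀ i : Label a b, block i = 3 → i ∈ T) ↔ .inr (.inr (.inr (.inl ()))) ∈ T := by
    simp [block, Unique.forall_iff]
  have h4 : (∀ i : Label a b, block i = 4 → i ∈ T) ↔
      ∀ j, .inr (.inr (.inr (.inr j))) ∈ T := by simp [block]
  rw [h5, key, key, key, key, key]
  change ¬ (_ ∧ ∀ i, block i = 1 → i ∈ T) ∧ ¬ (_ ∧ ∀ i, block i = 2 → i ∈ T) ∧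
    ¬ (_ ∧ ∀ i, block i = 3 → i ∈ T) ∧ ¬ (_ ∧ ∀ i, block i = 4 → i ∈ T) ∧
    ¬ (_ ∧ ∀ i, block i = 0 → i ∈ T) ↔ _
  rw [h0, h1, h2, h3, h4]

theorem block_surjective {a b : ℕ} (ha : 2 ≤ a) (hb : 2 ≤ b) :
    Function.Surjective (block (a := a) (b := b)) := by
  intro k
  fin_cases k
  · exact ⟨.inl ⟨0, by omega⟩, rfl⟩
  · exact ⟨.inr (.inl ⟨0, by omega⟩), rfl⟩
  · exact ⟨.inr (.inr (.inl ())), rfl⟩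
  · exact ⟨.inr (.inr (.inr (.inl ()))), rfl⟩
  · exact ⟨.inr (.inr (.inr (.inr ⟨0, by omega⟩))), rfl⟩

theorem eq_of_consecutive_subset {a b : ℕ} (ha : 2 ≤ a) (hb : 2 ≤ b) {k l : Fin 5}
    (h : consecutive a b k ⊆ consecutive a b l) : k = l := by
  have h' : ∀ c : Fin 5, c = k ∨ c = k + 1 → c = l ∨ c = l + 1 := by
    intro c hc
    obtain ⟨i, rfl⟩ := block_surjective ha hb c
    exact h hc
  have key : ∀ k l : Fin 5, (∀ c, c = k ∨ c = k + 1 → c = l ∨ c = l + 1) → k = l := by decide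
  exact key k l h'

theorem consecutive_ne_univ {a b : ℕ} (ha : 2 ≤ a) (hb : 2 ≤ b) (k : Fin 5) :
    consecutive a b k ≠ Set.univ := by
  intro h
  have key : ∀ k : Fin 5, k + 1 ≠ k := by decide
  exact key k (eq_of_consecutive_subset ha hb (h ▸ Set.subset_univ _))

theorem vertex_mem_of_block_mem {a b : ℕ} (ha : 2 ≤ a) (hb : 2 ≤ b)
    {N : AddSubgroup (Fin (a + 2 * b - 1) → ℝ)}
    (hv : ∃ i₀, ∀ i ≠ i₀, v a b i ∈ N) (hy : ∃ j₀, ∀ j ≠ j₀, y a b j ∈ N)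
    (hu : ∃ j₀, ∀ j ≠ j₀, u a b j ∈ N)
    (h : ((∀ i, v a b i ∈ N) ∧ z a b ∈ N) ∨ ((∀ j, y a b j ∈ N) ∧ t a b ∈ N) ∨
      (z a b ∈ N ∧ ∀ j, u a b j ∈ N) ∨ (t a b ∈ N ∧ ∀ i, v a b i ∈ N) ∨
      ((∀ j, u a b j ∈ N) ∧ ∀ j, y a b j ∈ N)) (i : Label a b) : vertex a b i ∈ N := by
  obtain ⟨i₀, hv⟩ := hv
  obtain ⟨j₀, hy⟩ := hy
  obtain ⟨j₁, hu⟩ := hu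
  have hvy := sum_v_add_sum_y ha hb
  have hyz := sum_y_add_z ha hb
  have hzt : t a b = - z a b := (neg_eq_of_add_eq_zero_right (z_add_t a b)).symm
  have htz : t a b ∈ N ↔ z a b ∈ N := by rw [hzt, neg_mem_iff]
  have hs : ∀ {m : ℕ} {f : Fin m → Fin (a + 2 * b - 1) → ℝ}, (∀ i, f i ∈ N) → ∑ i, f i ∈ N :=
    fun h => N.sum_mem fun i _ => h i
  have main : t a b ∈ N ∧ z a b ∈ N ∧ ∑ i, v a b i ∈ N ∧ ∑ j, y a b j ∈ N ∧ ∑ j, u a b j ∈ N := by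
    have viaY (ht : t a b ∈ N) (hY : ∑ j, y a b j ∈ N) :
        t a b ∈ N ∧ z a b ∈ N ∧ ∑ i, v a b i ∈ N ∧ ∑ j, y a b j ∈ N ∧ ∑ j, u a b j ∈ N :=
      ⟨ht, htz.1 ht, (N.add_mem_cancel_right hY).1 (hvy ▸ N.nsmul_mem ht _), hY,
        hyz ▸ N.add_mem hY (htz.1 ht)⟩
    have viaV (ht : t a b ∈ N) (hV : ∑ i, v a b i ∈ N) :=
      viaY ht ((N.add_mem_cancel_left hV).1 (hvy ▸ N.nsmul_mem ht _))
    rcases h with ⟨hV, hz⟩ | ⟨hY, ht⟩ | ⟨hz, hU⟩ | ⟨ht, hV⟩ | ⟨hU, hY⟩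
    · exact viaV (htz.2 hz) (hs hV)
    · exact viaY ht (hs hY)
    · exact viaY (htz.2 hz) ((N.add_mem_cancel_right hz).1 (hyz ▸ hs hU))
    · exact viaV ht (hs hV)
    · exact viaY (htz.2 ((N.add_mem_cancel_left (hs hY)).1 (hyz ▸ hs hU))) (hs hY)
  obtain ⟨ht, hz, hV, hY, hU⟩ := main
  have all : ∀ {m : ℕ} {f : Fin m → Fin (a + 2 * b - 1) → ℝ} {i₀ : Fin m},
      ∑ i, f i ∈ N → (∀ i ≠ i₀, f i ∈ N) → ∀ i, f i ∈ N := by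
    intro m f i₀ hf h i
    by_cases hi : i = i₀
    · exact hi ▸ mem_of_sum_mem hf i₀ h
    · exact h i hi
  rcases i with i | j | j | j | j
  · exact all hV hv i
  · exact all hY hy j
  · exact hz
  · exact ht
  · exact all hU hu j

theorem card_label {a b : ℕ} (ha : 2 ≤ a) :
    Fintype.card (Label a b) = (a + 2 * b - 1) + 3 := by
  simp only [Fintype.card_sum, Fintype.card_fin, Fintype.card_unit]
  omega

theorem card_and_vertex_mem {a b : ℕ} (ha : 2 ≤ a) (hb : 2 ≤ b) {T : Finset (Label a b)}
    (hT : ∀ k, ¬ consecutive a b k ⊆ T) (hcard : a + 2 * b - 1 ≤ T.card) :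
    T.card = a + 2 * b - 1 ∧ ∀ {N : AddSubgroup (Fin (a + 2 * b - 1) → ℝ)},
      (∀ i ∈ T, vertex a b i ∈ N) → ∀ i, vertex a b i ∈ N := by
  classical
  have hle : Tᶜ.card + T.card = (a + 2 * b - 1) + 3 := by
    rw [Finset.card_compl_add_card, card_label ha]
  have hsum : Tᶜ.card = ∑ i, if i ∉ T then 1 else 0 := by
    rw [Finset.sum_boole]
    simp [Finset.compl_eq_univ_sdiff, Finset.sdiff_eq_filter]
  rw [Fintype.sum_sum_type, Fintype.sum_sum_type, Fintype.sum_sum_type, Fintype.sum_sum_type]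
    at hsum
  simp only [Finset.univ_unique (α := Unit), Finset.sum_singleton, PUnit.default_eq_unit] at hsum
  simp only [Finset.sum_boole, Nat.cast_id] at hsum
  rw [forall_not_consecutive_subset] at hT
  simp only [Finset.mem_coe] at hT
  have full {m : ℕ} (f : Fin m → Label a b) :
      (∀ i, f i ∈ T) ↔ (Finset.univ.filter fun i => f i ∉ T).card = 0 := by
    simp [Finset.filter_eq_empty_iff]
  have almost {m : ℕ} (hm : 2 ≤ m) (f : Fin m → Label a b)
      (h : (Finset.univ.filter fun i => f i ∉ T).card ≤ 1) : ∃ i₀, ∀ i ≠ i₀, f i ∈ T := by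
    have : Nonempty (Fin m) := ⟨⟨0, by omega⟩⟩
    obtain ⟨i₀, hi₀⟩ := Finset.card_le_one_iff_subset_singleton.1 h
    refine ⟨i₀, fun i hi => by_contra fun hi' => hi ?_⟩
    simpa using hi₀ (Finset.mem_filter.2 ⟨Finset.mem_univ i, hi'⟩)
  have one (i : Label a b) : i ∈ T ↔ (if i ∉ T then 1 else 0) = 0 := by simp
  have one_le (i : Label a b) : (if i ∉ T then 1 else 0) ≤ 1 := by split_ifs <;> simp
  have hV := full (fun i => .inl i)
  have hY := full (fun j => .inr (.inl j))
  have hU := full (fun j => .inr (.inr (.inr (.inr j))))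
  have hz := one (.inr (.inr (.inl ())))
  have ht := one (.inr (.inr (.inr (.inl ()))))
  have aV := almost ha (fun i => .inl i)
  have aY := almost hb (fun j => .inr (.inl j))
  have aU := almost hb (fun j => .inr (.inr (.inr (.inr j))))
  have key : ∀ {cV cY cz ct cU : ℕ}, cV + (cY + (cz + (ct + cU))) ≤ 3 →
      (¬ (cV = 0 ∧ cY = 0) ∧ ¬ (cY = 0 ∧ cz = 0) ∧ ¬ (cz = 0 ∧ ct = 0) ∧ ¬ (ct = 0 ∧ cU = 0) ∧
        ¬ (cU = 0 ∧ cV = 0)) →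
      cV + (cY + (cz + (ct + cU))) = 3 ∧ cV ≤ 1 ∧ cY ≤ 1 ∧ cU ≤ 1 ∧
      ((cV = 0 ∧ cz = 0) ∨ (cY = 0 ∧ ct = 0) ∨ (cz = 0 ∧ cU = 0) ∨ (ct = 0 ∧ cV = 0) ∨
        (cU = 0 ∧ cY = 0)) := by
    intros
    omega
  rw [hV, hY, hU, hz, ht] at hT
  have hC : Tᶜ.card ≤ 3 := by omega
  rw [hsum] at hC
  obtain ⟨h3, cV, cY, cU, hcases⟩ := key (by exact hC) hT
  have h3' : Tᶜ.card = 3 := hsum.trans h3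
  rw [← hV, ← hY, ← hU, ← hz, ← ht] at hcases
  refine ⟨by omega, fun {N} hN => ?_⟩
  refine vertex_mem_of_block_mem ha hb ((aV cV).imp fun _ h i hi => hN (.inl i) (h i hi))
    ((aY cY).imp fun _ h i hi => hN (.inr (.inl i)) (h i hi))
    ((aU cU).imp fun _ h i hi => hN (.inr (.inr (.inr (.inr i)))) (h i hi)) ?_
  refine hcases.imp ?_ (Or.imp ?_ (Or.imp ?_ (Or.imp ?_ ?_)))
  · exact And.imp (fun h i => hN (.inl i) (h i)) (hN (.inr (.inr (.inl ()))))
  · exact And.imp (fun h i => hN (.inr (.inl i)) (h i)) (hN (.inr (.inr (.inr (.inl ())))))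
  · exact And.imp (hN (.inr (.inr (.inl ())))) (fun h i => hN (.inr (.inr (.inr (.inr i)))) (h i))
  · exact And.imp (hN (.inr (.inr (.inr (.inl ()))))) (fun h i => hN (.inl i) (h i))
  · exact And.imp (fun h i => hN (.inr (.inr (.inr (.inr i)))) (h i))
      (fun h i => hN (.inr (.inl i)) (h i))

theorem eq_top_of_vertex_mem {a b : ℕ} (ha : 2 ≤ a) (hb : 2 ≤ b)
    {N : Submodule ℝ (Fin (a + 2 * b - 1) → ℝ)} (hN : ∀ i, vertex a b i ∈ N) : N = ⊤ := by
  rw [eq_top_iff]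
  intro x _
  rw [pi_eq_sum_univ' x]
  exact N.sum_mem fun q _ => N.smul_mem _
    (single_mem_of_vertex_mem ha hb (N := N.toAddSubgroup) hN q)

theorem exists_continuousLinearMap {a b : ℕ} (ha : 2 ≤ a) (hb : 2 ≤ b)
    (pv : Fin a → ℝ) (py : Fin b → ℝ) (pz pt : ℝ) (pu : Fin b → ℝ)
    (hvy : ∑ i, pv i + ∑ j, py j = ((a : ℝ) + b - 1) * pt)
    (hyz : ∑ j, py j + pz = ∑ j, pu j) (hzt : pz + pt = 0) :
    ∃ l : (Fin (a + 2 * b - 1) → ℝ) →L[ℝ] ℝ, ∀ i, l (vertex a b i) =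
      Sum.elim pv (Sum.elim py (Sum.elim (fun _ => pz) (Sum.elim (fun _ => pt) pu))) i := by
  classical
  set p : Label a b → ℝ :=
    Sum.elim pv (Sum.elim py (Sum.elim (fun _ => pz) (Sum.elim (fun _ => pt) pu)))
  set i₀ : Fin a := ⟨0, by omega⟩
  set j₀ : Fin b := ⟨0, by omega⟩
  set T : Finset (Label a b) :=
    ({.inl i₀, .inr (.inr (.inl ())), .inr (.inr (.inr (.inr j₀)))} : Finset (Label a b))ᶜ with hT
  have hTcard : T.card = a + 2 * b - 1 := by
    rw [hT, Finset.card_compl, card_label ha]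
    rw [Finset.card_insert_of_notMem (by simp), Finset.card_insert_of_notMem (by simp),
      Finset.card_singleton]
    omega
  have hspan : ⊤ ≤ Submodule.span ℝ (Set.range fun i : T => vertex a b i) := by
    have hmem (i : Label a b) (hi : i ∈ T) :
        vertex a b i ∈ Submodule.span ℝ (Set.range fun i : T => vertex a b i) :=
      Submodule.subset_span ⟨⟨i, hi⟩, rfl⟩
    refine (eq_top_of_vertex_mem ha hb (vertex_mem_of_block_mem ha hb
      (N := (Submodule.span ℝ (Set.range fun i : T => vertex a b i)).toAddSubgroup)
      ⟨i₀, fun i hi => hmem (.inl i) ?_⟩ ⟨j₀, fun j hj => hmem (.inr (.inl j)) ?_⟩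
      ⟨j₀, fun j hj => hmem (.inr (.inr (.inr (.inr j)))) ?_⟩
      (.inr (.inl ⟨fun j => hmem (.inr (.inl j)) ?_,
        hmem (.inr (.inr (.inr (.inl ())))) ?_⟩)))).ge <;> simp_all
  let B := basisOfTopLeSpanOfCardEqFinrank (fun i : T => vertex a b i) hspan (by simp [hTcard])
  let l := LinearMap.toContinuousLinearMap (B.constr ℝ (fun i : T => p i))
  have hl (i : Label a b) (hi : i ∈ T) : l (vertex a b i) = p i := by
    have := B.constr_basis ℝ (fun i : T => p i) ⟨i, hi⟩
    simpa [B, l] using this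
  have hlv (i) (hi : i ≠ i₀) : l (v a b i) = pv i := hl (.inl i) (by simp [hT, hi])
  have hly (j) : l (y a b j) = py j := hl (.inr (.inl j)) (by simp [hT])
  have hlt : l (t a b) = pt := hl (.inr (.inr (.inr (.inl ())))) (by simp [hT])
  have hlu (j) (hj : j ≠ j₀) : l (u a b j) = pu j :=
    hl (.inr (.inr (.inr (.inr j)))) (by simp [hT, hj])
  have hlz : l (z a b) = pz := by
    have := congrArg l (z_add_t a b)
    rw [map_add, map_zero, hlt] at this
    linarith
  have e1 := congrArg l (sum_v_add_sum_y ha hb)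
  have e2 := congrArg l (sum_y_add_z ha hb)
  simp only [map_add, map_sum, map_nsmul, hly, hlt, hlz] at e1 e2
  rw [nsmul_eq_mul, Nat.cast_sub (by omega)] at e1
  push_cast at e1
  have complete {m : ℕ} {f g : Fin m → ℝ} {k : Fin m} (h : ∀ i ≠ k, f i = g i)
      (hs : ∑ i, f i = ∑ i, g i) (i : Fin m) : f i = g i := by
    by_cases hi : i = k
    · subst hi
      rw [← Finset.add_sum_erase _ _ (Finset.mem_univ i),
        ← Finset.add_sum_erase _ g (Finset.mem_univ i),
        Finset.sum_congr rfl fun j hj => h j (Finset.ne_of_mem_erase hj)] at hs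
      exact add_right_cancel hs
    · exact h i hi
  refine ⟨l, fun i => ?_⟩
  rcases i with i | j | j | j | j
  · exact complete hlv (by linarith) i
  · exact hly j
  · exact hlz
  · exact hlt
  · exact complete hlu (by linarith) j

theorem exists_sum_eq {m : ℕ} (T : Fin m → Prop) {σ : ℝ} (h : (∀ i, T i) → σ = m)
    (h' : (¬ ∀ i, T i) → σ < m) :
    ∃ p : Fin m → ℝ, (∀ i, T i → p i = 1) ∧ (∀ i, ¬ T i → p i < 1) ∧ ∑ i, p i = σ := by
  classical
  by_cases hT : ∀ i, T i
  · exact ⟨1, by simp, fun i hi => absurd (hT i) hi, by simp [h hT]⟩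
  have hc : 0 < (Finset.univ.filter fun i => ¬ T i).card := by
    obtain ⟨i, hi⟩ := not_forall.1 hT
    exact Finset.card_pos.2 ⟨i, by simpa using hi⟩
  have hc' : (0 : ℝ) < (Finset.univ.filter fun i => ¬ T i).card := by exact_mod_cast hc
  have hσ := h' hT
  refine ⟨fun i => 1 - if ¬ T i then
    (m - σ) / (Finset.univ.filter fun i => ¬ T i).card else 0, ?_, ?_, ?_⟩
  · intro i hi
    simp [hi]
  · intro i hi
    simp only [hi, not_false_eq_true, if_true, sub_lt_self_iff]
    exact div_pos (by linarith) hc'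
  · rw [Finset.sum_sub_distrib, ← Finset.sum_filter]
    simp only [Finset.sum_const, Finset.card_univ, Fintype.card_fin, nsmul_eq_mul]
    field_simp
    ring

theorem exists_level {a b : ℝ} (ha : 2 ≤ a) (hb : 2 ≤ b) {V Y Z T U : Prop}
    (h : ¬ (V ∧ Y) ∧ ¬ (Y ∧ Z) ∧ ¬ (Z ∧ T) ∧ ¬ (T ∧ U) ∧ ¬ (U ∧ V)) :
    ∃ τ σ : ℝ, ((V → (a + b - 1) * τ - σ = a) ∧ (¬ V → (a + b - 1) * τ - σ < a)) ∧
      ((Y → σ = b) ∧ (¬ Y → σ < b)) ∧ ((Z → -τ = 1) ∧ (¬ Z → -τ < 1)) ∧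
      ((T → τ = 1) ∧ (¬ T → τ < 1)) ∧ ((U → σ - τ = b) ∧ (¬ U → σ - τ < b)) := by
  by_cases hV : V <;> by_cases hY : Y <;> by_cases hZ : Z <;> by_cases hT : T <;>
    by_cases hU : U <;> simp only [hV, hY, hZ, hT, hU, and_true, true_and, not_true_eq_false,
      not_false_eq_true, and_false, forall_const, IsEmpty.forall_iff, and_self] at h ⊢
  · exact ⟨-1, -2 * a - b + 1, by refine ⟨?_, ?_, ?_, ?_, ?_⟩ <;> linarith⟩
  · exact ⟨1, b - 1, by refine ⟨?_, ?_, ?_, ?_, ?_⟩ <;> linarith⟩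
  · exact ⟨0, -a, by refine ⟨?_, ?_, ?_, ?_, ?_⟩ <;> linarith⟩
  · exact ⟨1, b, by refine ⟨?_, ?_, ?_, ?_, ?_⟩ <;> linarith⟩
  · exact ⟨0, b, by refine ⟨?_, ?_, ?_, ?_, ?_⟩ <;> linarith⟩
  · exact ⟨1 / 2, b, by refine ⟨?_, ?_, ?_, ?_, ?_⟩ <;> linarith⟩
  · exact ⟨-1, b - 1, by refine ⟨?_, ?_, ?_, ?_, ?_⟩ <;> linarith⟩
  · exact ⟨-1, -1, by refine ⟨?_, ?_, ?_, ?_, ?_⟩ <;> linarith⟩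
  · exact ⟨1, b - 1 / 2, by refine ⟨?_, ?_, ?_, ?_, ?_⟩ <;> linarith⟩
  · exact ⟨-1 / 2, b - 1 / 2, by refine ⟨?_, ?_, ?_, ?_, ?_⟩ <;> linarith⟩
  · exact ⟨0, 0, by refine ⟨?_, ?_, ?_, ?_, ?_⟩ <;> linarith⟩

theorem exists_supporting {a b : ℕ} (ha : 2 ≤ a) (hb : 2 ≤ b) {T : Set (Label a b)}
    (hT : ∀ k, ¬ consecutive a b k ⊆ T) :
    ∃ l : (Fin (a + 2 * b - 1) → ℝ) →L[ℝ] ℝ,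
      (∀ i ∈ T, l (vertex a b i) = 1) ∧ ∀ i ∉ T, l (vertex a b i) < 1 := by
  rw [forall_not_consecutive_subset] at hT
  obtain ⟨τ, σ, ⟨hV, hV'⟩, ⟨hY, hY'⟩, ⟨hZ, hZ'⟩, ⟨hT, hT'⟩, ⟨hU, hU'⟩⟩ :=
    exists_level (a := a) (b := b) (by exact_mod_cast ha) (by exact_mod_cast hb) hT
  obtain ⟨pv, hv, hv', sv⟩ := exists_sum_eq (fun i : Fin a => .inl i ∈ T) hV hV'
  obtain ⟨py, hy, hy', sy⟩ := exists_sum_eq (fun j : Fin b => .inr (.inl j) ∈ T) hY hY'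
  obtain ⟨pu, hu, hu', su⟩ :=
    exists_sum_eq (fun j : Fin b => .inr (.inr (.inr (.inr j))) ∈ T) hU hU'
  obtain ⟨l, hl⟩ := exists_continuousLinearMap ha hb pv py (-τ) τ pu
    (by rw [sv, sy]; ring) (by rw [sy, su]; ring) (by ring)
  refine ⟨l, ?_, ?_⟩
  · rintro (i | j | j | j | j) hi <;> rw [hl]
    exacts [hv i hi, hy j hi, hZ hi, hT hi, hu j hi]
  · rintro (i | j | j | j | j) hi <;> rw [hl]
    exacts [hv' i hi, hy' j hi, hZ' hi, hT' hi, hu' j hi]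

theorem mem_convexHull_of_forall_le {E : Type*} [AddCommGroup E] [Module ℝ E] {s : Set E} {x : E}
    {f : E →ₗ[ℝ] ℝ} {M : ℝ} (hx : x ∈ convexHull ℝ s) (hs : ∀ y ∈ s, f y ≤ M) (hxM : f x = M) :
    x ∈ convexHull ℝ {y ∈ s | f y = M} := by
  classical
  obtain ⟨ι, _, w, p, hw, hw1, hp, rfl⟩ := mem_convexHull_iff_exists_fintype.1 hx
  have hzero : ∑ i, w i * (M - f (p i)) = 0 := by
    simp only [mul_sub, Finset.sum_sub_distrib, ← Finset.sum_mul, hw1, one_mul]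
    rw [← hxM]
    simp
  rw [Finset.sum_eq_zero_iff_of_nonneg
    fun i _ => mul_nonneg (hw i) (sub_nonneg.2 (hs _ (hp i)))] at hzero
  rw [← Finset.sum_subset (Finset.filter_subset (fun i => w i ≠ 0) Finset.univ)
    (fun i _ hi => by simp_all)]
  refine (convex_convexHull ℝ _).sum_mem (fun i _ => hw i) ?_ fun i hi => ?_
  · rw [Finset.sum_filter_ne_zero, hw1]
  · refine subset_convexHull ℝ _ ⟨hp i, ?_⟩
    have := (mul_eq_zero.1 (hzero i (Finset.mem_univ i))).resolve_left (Finset.mem_filter.1 hi).2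
    linarith

theorem le_of_mem_convexHull {E : Type*} [AddCommGroup E] [Module ℝ E] {s : Set E} {x : E}
    {f : E →ₗ[ℝ] ℝ} {M : ℝ} (hx : x ∈ convexHull ℝ s) (hs : ∀ y ∈ s, f y ≤ M) : f x ≤ M :=
  convexHull_min (t := {y | f y ≤ M}) hs (convex_halfSpace_le f.isLinear M) hx

theorem abs_det_eq_one_of_single_mem_span {n : ℕ} {w : Fin n → Fin n → ℝ}
    (hw : ∀ i, IsLatticePoint (w i))
    (h : ∀ q, (Pi.single q 1 : Fin n → ℝ) ∈ Submodule.span ℤ (Set.range w)) :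
    |(Matrix.of w).det| = 1 := by
  choose A hA using hw
  choose C hC using fun q => (Submodule.mem_span_range_iff_exists_fun ℤ).1 (h q)
  have hA' : Matrix.of w = (Matrix.of A).map (Int.castRingHom ℝ) := by
    ext i j
    simp [hA]
  have hmul : Matrix.of C * Matrix.of A = 1 := by
    apply Matrix.map_injective (Int.castRingHom ℝ).injective_int
    beta_reduce
    rw [Matrix.map_mul, ← hA']
    ext i j
    have := congrFun (hC i) j
    rw [Finset.sum_apply, Pi.single_apply] at this
    simpa [Matrix.mul_apply, Matrix.one_apply, eq_comm (a := i)] using this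
  have hdet := congrArg Matrix.det hmul
  rw [Matrix.det_mul, Matrix.det_one] at hdet
  have : IsUnit (Matrix.of A).det := .of_mul_eq_one_right _ hdet
  rw [hA', ← RingHom.mapMatrix_apply, ← RingHom.map_det, eq_intCast, ← Int.cast_abs,
    Int.isUnit_iff_abs_eq.1 this, Int.cast_one]

variable {a b : ℕ}

theorem vertex_mem_P (i : Label a b) : vertex a b i ∈ P a b :=
  P_eq a b ▸ subset_convexHull ℝ _ ⟨i, rfl⟩

theorem le_of_mem_P {l : (Fin (a + 2 * b - 1) → ℝ) →L[ℝ] ℝ} {M : ℝ}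
    (h : ∀ i, l (vertex a b i) ≤ M) {x : Fin (a + 2 * b - 1) → ℝ} (hx : x ∈ P a b) : l x ≤ M := by
  rw [P_eq] at hx
  exact le_of_mem_convexHull (f := (l : (Fin (a + 2 * b - 1) → ℝ) →ₗ[ℝ] ℝ)) hx
    (Set.forall_mem_range.2 h)

theorem mem_convexHull_image_of_mem_P {l : (Fin (a + 2 * b - 1) → ℝ) →L[ℝ] ℝ} {M : ℝ}
    (h : ∀ i, l (vertex a b i) ≤ M) {x : Fin (a + 2 * b - 1) → ℝ} (hx : x ∈ P a b)
    (hxM : l x = M) : x ∈ convexHull ℝ (vertex a b '' {i | l (vertex a b i) = M}) := by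
  rw [P_eq] at hx
  refine convexHull_mono ?_ (mem_convexHull_of_forall_le
    (f := (l : (Fin (a + 2 * b - 1) → ℝ) →ₗ[ℝ] ℝ)) hx (Set.forall_mem_range.2 h) hxM)
  rintro _ ⟨⟨i, rfl⟩, hi⟩
  exact ⟨i, hi, rfl⟩

theorem eq_zero_of_vertex_nonpos (ha : 2 ≤ a) (hb : 2 ≤ b)
    {l : (Fin (a + 2 * b - 1) → ℝ) →L[ℝ] ℝ} (h : ∀ i, l (vertex a b i) ≤ 0) : l = 0 := by
  have hv (i : Fin a) : l (v a b i) ≤ 0 := h (.inl i)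
  have hy (j : Fin b) : l (y a b j) ≤ 0 := h (.inr (.inl j))
  have hz : l (z a b) ≤ 0 := h (.inr (.inr (.inl ())))
  have ht : l (t a b) ≤ 0 := h (.inr (.inr (.inr (.inl ()))))
  have hu (j : Fin b) : l (u a b j) ≤ 0 := h (.inr (.inr (.inr (.inr j))))
  have e1 := congrArg l (sum_v_add_sum_y ha hb)
  have e2 := congrArg l (sum_y_add_z ha hb)
  have e3 := congrArg l (z_add_t a b)
  simp only [map_add, map_sum, map_nsmul, map_zero] at e1 e2 e3
  have hz0 : l (z a b) = 0 := by linarith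
  have ht0 : l (t a b) = 0 := by linarith
  rw [ht0, smul_zero] at e1
  have sV := Finset.sum_nonpos fun i (_ : i ∈ Finset.univ) => hv i
  have sY := Finset.sum_nonpos fun i (_ : i ∈ Finset.univ) => hy i
  have all {m : ℕ} {f : Fin m → ℝ} (hf : ∀ i, f i ≤ 0) (hs : ∑ i, f i = 0) (i : Fin m) :
      f i = 0 :=
    (Finset.sum_eq_zero_iff_of_nonpos fun i _ => hf i).1 hs i (Finset.mem_univ i)
  have hker : (l : (Fin (a + 2 * b - 1) → ℝ) →ₗ[ℝ] ℝ).ker = ⊤ := by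
    refine eq_top_of_vertex_mem ha hb fun i => LinearMap.mem_ker.2 ?_
    rcases i with i | j | j | j | j
    · exact all hv (by linarith) i
    · exact all hy (by linarith) j
    · exact hz0
    · exact ht0
    · exact all hu (by linarith) j
  ext x
  exact LinearMap.mem_ker.1 (hker ▸ Submodule.mem_top : x ∈ _)

theorem not_consecutive_subset_of_pos (ha : 2 ≤ a) (hb : 2 ≤ b)
    {l : (Fin (a + 2 * b - 1) → ℝ) →L[ℝ] ℝ} {M : ℝ} (hM : 0 < M)
    (h : ∀ i, l (vertex a b i) ≤ M) (k : Fin 5) :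
    ¬ consecutive a b k ⊆ {i | l (vertex a b i) = M} := by
  revert k
  rw [forall_not_consecutive_subset]
  have hv (i : Fin a) : l (v a b i) ≤ M := h (.inl i)
  have hz : l (z a b) ≤ M := h (.inr (.inr (.inl ())))
  have ht : l (t a b) ≤ M := h (.inr (.inr (.inr (.inl ()))))
  have e1 := congrArg l (sum_v_add_sum_y ha hb)
  have e2 := congrArg l (sum_y_add_z ha hb)
  have e3 := congrArg l (z_add_t a b)
  simp only [map_add, map_sum, map_nsmul, map_zero] at e1 e2 e3
  rw [nsmul_eq_mul, Nat.cast_sub (by omega)] at e1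
  push_cast at e1
  have full {m : ℕ} {f : Fin m → ℝ} (hf : ∀ i, f i = M) : ∑ i, f i = m * M := by
    simp [hf]
  have le {m : ℕ} {f : Fin m → ℝ} (hf : ∀ i, f i ≤ M) : ∑ i, f i ≤ m * M := by
    simpa using Finset.sum_le_sum fun i (_ : i ∈ Finset.univ) => hf i
  have sY := le (f := fun j => l (y a b j)) fun j => h (.inr (.inl j))
  have sU := le (f := fun j => l (u a b j)) fun j => h (.inr (.inr (.inr (.inr j))))
  have ha' : (2 : ℝ) ≤ a := by exact_mod_cast ha
  have hb' : (2 : ℝ) ≤ b := by exact_mod_cast hb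
  simp only [Set.mem_ofPred, vertex, Sum.elim_inl, Sum.elim_inr]
  refine ⟨?_, ?_, ?_, ?_, ?_⟩
  · rintro ⟨hV, hY⟩
    rw [full hV, full hY] at e1
    nlinarith [mul_le_mul_of_nonneg_left ht (by linarith : (0 : ℝ) ≤ a + b - 1)]
  · rintro ⟨hY, hZ⟩
    rw [full hY] at e2
    linarith
  · rintro ⟨hZ, hT⟩
    linarith
  · rintro ⟨hT, hU⟩
    rw [full hU] at e2
    linarith
  · rintro ⟨hU, hV⟩
    rw [full hV] at e1
    rw [full hU] at e2
    nlinarith [mul_le_mul_of_nonneg_left ht (by linarith : (0 : ℝ) ≤ a + b - 2)]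

theorem isFaceOf_convexHull_image (ha : 2 ≤ a) (hb : 2 ≤ b) {T : Set (Label a b)}
    (hT : ∀ k, ¬ consecutive a b k ⊆ T) : IsFaceOf (convexHull ℝ (vertex a b '' T)) (P a b) := by
  obtain ⟨l, h1, hlt⟩ := exists_supporting ha hb hT
  have hle (i) : l (vertex a b i) ≤ 1 := by
    by_cases hi : i ∈ T
    exacts [(h1 i hi).le, (hlt i hi).le]
  have hset : {i | l (vertex a b i) = 1} = T := by
    ext i
    exact ⟨fun hi => by_contra fun hi' => (hlt i hi').ne hi, h1 i⟩
  rintro hne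
  obtain ⟨_, i₀, hi₀, rfl⟩ := convexHull_nonempty_iff.1 hne
  refine ⟨l, Set.Subset.antisymm (fun x hx => ?_) fun x ⟨hx, hmax⟩ => ?_⟩
  · have hx1 : l x = 1 := by
      refine convexHull_min (t := {x | l x = 1}) ?_
        (convex_hyperplane (l : (Fin (a + 2 * b - 1) → ℝ) →ₗ[ℝ] ℝ).isLinear 1) hx
      rintro _ ⟨i, hi, rfl⟩
      exact h1 i hi
    refine ⟨P_eq a b ▸ convexHull_mono (Set.image_subset_range _ _) hx, fun y hy => ?_⟩
    exact hx1 ▸ le_of_mem_P hle hy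
  · have hx1 : l x = 1 :=
      (le_of_mem_P hle hx).antisymm (h1 i₀ hi₀ ▸ hmax _ (vertex_mem_P i₀))
    exact hset ▸ mem_convexHull_image_of_mem_P hle hx hx1

theorem consecutive_not_subset_singleton (ha : 2 ≤ a) (hb : 2 ≤ b) (i : Label a b) (k : Fin 5) :
    ¬ consecutive a b k ⊆ {i} := by
  intro h
  have key : ∀ k : Fin 5, k + 1 ≠ k := by decide
  obtain ⟨i₁, h₁⟩ := block_surjective ha hb k
  obtain ⟨i₂, h₂⟩ := block_surjective ha hb (k + 1)
  have e₁ : i₁ = i := h (.inl h₁)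
  have e₂ : i₂ = i := h (.inr h₂)
  exact key k (h₂ ▸ h₁ ▸ e₁ ▸ e₂ ▸ rfl)

theorem vertex_injective (ha : 2 ≤ a) (hb : 2 ≤ b) : Function.Injective (vertex a b) := by
  intro i j hij
  obtain ⟨l, h1, hlt⟩ := exists_supporting ha hb (consecutive_not_subset_singleton ha hb i)
  by_contra hne
  have := hlt j (Ne.symm hne)
  rw [← hij, h1 i rfl] at this
  exact this.false

theorem vertexSet_P (ha : 2 ≤ a) (hb : 2 ≤ b) :
    vertexSet (P a b) = Set.range (vertex a b) := by
  refine Set.Subset.antisymm ?_ ?_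
  · rw [vertexSet, P_eq]
    exact extremePoints_convexHull_subset
  · rintro _ ⟨i, rfl⟩
    have := isFaceOf_convexHull_image ha hb (consecutive_not_subset_singleton ha hb i)
    rw [Set.image_singleton, convexHull_singleton] at this
    exact isExtreme_singleton.1 (IsExposed.isExtreme this)

theorem eq_zero_of_vertex_le (ha : 2 ≤ a) (hb : 2 ≤ b)
    {l : (Fin (a + 2 * b - 1) → ℝ) →L[ℝ] ℝ} {M : ℝ} (h : ∀ i, l (vertex a b i) ≤ M)
    (hM : ¬ 0 < M) : l = 0 :=
  eq_zero_of_vertex_nonpos ha hb fun i => (h i).trans (not_lt.1 hM)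

theorem not_isFaceOf_convexHull_image (ha : 2 ≤ a) (hb : 2 ≤ b) {T : Set (Label a b)} {k : Fin 5}
    (hk : consecutive a b k ⊆ T) (hT : T ≠ Set.univ) :
    ¬ IsFaceOf (convexHull ℝ (vertex a b '' T)) (P a b) := by
  intro hF
  obtain ⟨i₀, h₀⟩ := block_surjective ha hb k
  have hmem (i) (hi : i ∈ T) : vertex a b i ∈ convexHull ℝ (vertex a b '' T) :=
    subset_convexHull ℝ _ ⟨i, hi, rfl⟩
  obtain ⟨l, hl⟩ := hF ⟨_, hmem i₀ (hk (.inl h₀))⟩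
  have hmax (i) (hi : i ∈ T) (j) : l (vertex a b j) ≤ l (vertex a b i) :=
    (hl ▸ hmem i hi : vertex a b i ∈ {x ∈ P a b | ∀ y ∈ P a b, l y ≤ l x}).2 _ (vertex_mem_P j)
  have hle := hmax i₀ (hk (.inl h₀))
  by_cases hM : 0 < l (vertex a b i₀)
  · exact not_consecutive_subset_of_pos ha hb hM hle k fun i hi =>
      (hle i).antisymm (hmax i (hk hi) i₀)
  · have hl0 := eq_zero_of_vertex_le ha hb hle hM
    have hP : convexHull ℝ (vertex a b '' T) = P a b := by
      rw [hl, hl0]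
      simp
    have hsub : Set.range (vertex a b) ⊆ vertex a b '' T := by
      rw [← vertexSet_P ha hb, ← hP]
      exact extremePoints_convexHull_subset
    refine hT (Set.eq_univ_of_forall fun i => ?_)
    exact (vertex_injective ha hb).mem_set_image.1 (hsub ⟨i, rfl⟩)

theorem convex_P : Convex ℝ (P a b) := convex_convexHull ℝ _

theorem zero_mem_P : (0 : Fin (a + 2 * b - 1) → ℝ) ∈ P a b := by
  have hz : z a b ∈ P a b := vertex_mem_P (.inr (.inr (.inl ())))
  have ht : t a b ∈ P a b := vertex_mem_P (.inr (.inr (.inr (.inl ()))))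
  have := convex_P hz ht (by norm_num : (0 : ℝ) ≤ 1 / 2) (by norm_num : (0 : ℝ) ≤ 1 / 2)
    (by norm_num)
  rwa [← smul_add, z_add_t, smul_zero] at this

theorem vectorSpan_P (ha : 2 ≤ a) (hb : 2 ≤ b) : vectorSpan ℝ (P a b) = ⊤ :=
  eq_top_of_vertex_mem ha hb fun i => by
    simpa using vsub_mem_vectorSpan ℝ (vertex_mem_P i) zero_mem_P

theorem affineSpan_P (ha : 2 ≤ a) (hb : 2 ≤ b) : affineSpan ℝ (P a b) = ⊤ :=
  (AffineSubspace.affineSpan_eq_top_iff_vectorSpan_eq_top_of_nonempty ℝ _ _ ⟨0, zero_mem_P⟩).2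
    (vectorSpan_P ha hb)

theorem zero_mem_interior_P (ha : 2 ≤ a) (hb : 2 ≤ b) :
    (0 : Fin (a + 2 * b - 1) → ℝ) ∈ interior (P a b) := by
  have hne : (interior (P a b)).Nonempty := by
    rw [P_eq, interior_convexHull_nonempty_iff_affineSpan_eq_top, ← affineSpan_convexHull, ← P_eq]
    exact affineSpan_P ha hb
  by_contra h0
  obtain ⟨l, hl⟩ := geometric_hahn_banach_open_point convex_P.interior isOpen_interior h0
  rw [map_zero] at hl
  have hl0 : l = 0 := eq_zero_of_vertex_nonpos ha hb fun i => by
    have hsub : closure (interior (P a b)) ⊆ {x | l x ≤ 0} :=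
      closure_minimal (fun x hx => (hl x hx).le) (isClosed_le l.continuous continuous_const)
    refine hsub ?_
    rw [convex_P.closure_interior_eq_closure_of_nonempty_interior hne]
    exact subset_closure (vertex_mem_P i)
  obtain ⟨x, hx⟩ := hne
  simpa [hl0] using hl x hx

theorem isLatticePolytope_P (ha : 2 ≤ a) (hb : 2 ≤ b) : IsLatticePolytope (P a b) := by
  classical
  refine ⟨⟨Finset.univ.image (vertex a b), ?_, ?_⟩, affineSpan_P ha hb⟩
  · intro x hx
    obtain ⟨i, -, rfl⟩ := Finset.mem_image.1 hx
    exact vertex_isLatticePoint i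
  · simp [P_eq]

theorem exists_finset_of_isFacetOf (ha : 2 ≤ a) (hb : 2 ≤ b) {F : Set (Fin (a + 2 * b - 1) → ℝ)}
    (hF : IsFacetOf F (P a b)) :
    ∃ T : Finset (Label a b), (∀ k, ¬ consecutive a b k ⊆ T) ∧ a + 2 * b - 1 ≤ T.card ∧
      vertexSet (P a b) ∩ F = vertex a b '' T := by
  classical
  obtain ⟨hface, hdim⟩ := hF
  have hne : F.Nonempty := by
    by_contra h
    rw [Set.not_nonempty_iff_eq_empty.1 h, vectorSpan_empty, finrank_bot] at hdim
    omega
  obtain ⟨l, hl⟩ := hface hne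
  obtain ⟨x₀, hx₀⟩ := hne
  have hmem (x) : x ∈ F ↔ x ∈ P a b ∧ l x = l x₀ := by
    have hx₀' := hx₀
    rw [hl] at hx₀' ⊢
    exact ⟨fun hx => ⟨hx.1, (hx₀'.2 x hx.1).antisymm (hx.2 x₀ hx₀'.1)⟩,
      fun hx => ⟨hx.1, fun y hy => hx.2 ▸ hx₀'.2 y hy⟩⟩
  have hle (i) : l (vertex a b i) ≤ l x₀ := by
    have hx₀' := hx₀
    rw [hl] at hx₀'
    exact hx₀'.2 _ (vertex_mem_P i)
  have hM : 0 < l x₀ := by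
    by_contra hM
    have hl0 := eq_zero_of_vertex_le ha hb hle hM
    have hFP : F = P a b := by
      rw [hl, hl0]
      simp
    rw [hFP, vectorSpan_P ha hb, finrank_top, Module.finrank_fin_fun] at hdim
    omega
  let T : Finset (Label a b) := Finset.univ.filter fun i => l (vertex a b i) = l x₀
  have hT : (T : Set (Label a b)) = {i | l (vertex a b i) = l x₀} := by
    ext i
    simp [T]
  refine ⟨T, hT ▸ not_consecutive_subset_of_pos ha hb hM hle, ?_, ?_⟩
  · have hsub : F ⊆ convexHull ℝ (vertex a b '' T) := fun x hx =>
      hT ▸ mem_convexHull_image_of_mem_P hle ((hmem x).1 hx).1 ((hmem x).1 hx).2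
    have hTne : 0 < T.card := by
      obtain ⟨_, i, hi, -⟩ := convexHull_nonempty_iff.1 ⟨x₀, hsub hx₀⟩
      exact Finset.card_pos.2 ⟨i, hi⟩
    have h1 : vectorSpan ℝ F ≤
        vectorSpan ℝ (↑(T.image (vertex a b)) : Set (Fin (a + 2 * b - 1) → ℝ)) := by
      rw [Finset.coe_image, ← direction_affineSpan, ← direction_affineSpan,
        ← affineSpan_convexHull (vertex a b '' T)]
      exact AffineSubspace.direction_le (affineSpan_mono ℝ hsub)
    have h2 := Submodule.finrank_mono h1
    have h3 := finrank_vectorSpan_image_finset_le ℝ (vertex a b) T (n := T.card - 1) (by omega)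
    omega
  · rw [vertexSet_P ha hb, hT]
    ext x
    simp only [Set.mem_inter_iff, Set.mem_range, hmem, Set.mem_image]
    constructor
    · rintro ⟨⟨i, rfl⟩, -, hi⟩
      exact ⟨i, hi, rfl⟩
    · rintro ⟨i, hi, rfl⟩
      exact ⟨⟨i, rfl⟩, vertex_mem_P i, hi⟩

theorem isSmoothFano_P (ha : 2 ≤ a) (hb : 2 ≤ b) : IsSmoothFano (P a b) := by
  refine ⟨isLatticePolytope_P ha hb, zero_mem_interior_P ha hb, fun F hF => ?_⟩
  obtain ⟨T, hT, hcard, hTF⟩ := exists_finset_of_isFacetOf ha hb hF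
  obtain ⟨hcard, hN⟩ := card_and_vertex_mem ha hb hT hcard
  let e := (T.equivFinOfCardEq hcard).symm
  have hrange : Set.range (fun q => vertex a b (e q)) = vertex a b '' T := by
    refine (e.surjective.range_comp fun i : T => vertex a b i).trans ?_
    ext x
    simp
  refine ⟨fun q => vertex a b (e q), ?_, hrange.trans hTF.symm, fun q => vertex_isLatticePoint _,
    abs_det_eq_one_of_single_mem_span (fun q => vertex_isLatticePoint _) ?_⟩
  · exact (vertex_injective ha hb).comp (Subtype.val_injective.comp e.injective)
  · refine single_mem_of_vertex_mem ha hb (N := (Submodule.span ℤ _).toAddSubgroup)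
      (hN fun i hi => Submodule.subset_span ?_)
    rw [hrange]
    exact ⟨i, hi, rfl⟩

theorem isPrimitiveCollection_P_iff (ha : 2 ≤ a) (hb : 2 ≤ b)
    {A : Set (Fin (a + 2 * b - 1) → ℝ)} :
    IsPrimitiveCollection (P a b) A ↔ ∃ k, A = vertex a b '' consecutive a b k := by
  have hinj := vertex_injective ha hb
  constructor
  · rintro ⟨-, hA, hface, hprim⟩
    rw [vertexSet_P ha hb] at hA
    obtain ⟨T, rfl⟩ := Set.subset_range_iff_exists_image_eq.1 hA
    obtain ⟨k, hk⟩ : ∃ k, consecutive a b k ⊆ T := by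
      by_contra! h
      exact hface (isFaceOf_convexHull_image ha hb h)
    refine ⟨k, congrArg _ (Set.Subset.antisymm (fun i hi => by_contra fun hik => ?_) hk)⟩
    have hi' := hprim _ ⟨i, hi, rfl⟩
    rw [← Set.image_singleton, ← Set.image_sdiff hinj] at hi'
    refine not_isFaceOf_convexHull_image ha hb (k := k) (T := T \ {i}) ?_ ?_ hi'
    · exact fun j hj => ⟨hk hj, fun hji => hik (hji ▸ hj)⟩
    · exact fun h => (h ▸ Set.mem_univ i : i ∈ T \ {i}).2 rfl
  · rintro ⟨k, rfl⟩
    obtain ⟨i₀, h₀⟩ := block_surjective ha hb k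
    refine ⟨⟨_, i₀, .inl h₀, rfl⟩, vertexSet_P ha hb ▸ Set.image_subset_range _ _,
      not_isFaceOf_convexHull_image ha hb subset_rfl (consecutive_ne_univ ha hb k), ?_⟩
    rintro _ ⟨i, hi, rfl⟩
    rw [← Set.image_singleton, ← Set.image_sdiff hinj]
    refine isFaceOf_convexHull_image ha hb fun k' hk' => ?_
    obtain rfl := eq_of_consecutive_subset ha hb (hk'.trans Set.sdiff_subset)
    exact (hk' hi).2 rfl

theorem vertex_image_consecutive (k : Fin 5) : vertex a b '' consecutive a b k =
    ![Set.range (v a b) ∪ Set.range (y a b), Set.range (y a b) ∪ {z a b}, {z a b, t a b},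
      insert (t a b) (Set.range (u a b)), Set.range (u a b) ∪ Set.range (v a b)] k := by
  ext x
  fin_cases k <;> simp [consecutive, block, vertex, eq_comm, or_comm]

end Pab

/-- For `a, b ≥ 2`, the polytope `P(a,b)` is a smooth Fano
polytope of dimension `n = a + 2b - 1` with `n + 3` vertices
`v_1, …, v_a, y_1, …, y_b, z, t, u_1, …, u_b`, and its primitive relations are
exactly the five relations of Theorem `pic3cha`. -/
theorem Pab_isSmoothFano_with_primitive_relations (a b : ℕ) (ha : 2 ≤ a) (hb : 2 ≤ b) :
    IsSmoothFano (Pab.P a b) ∧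
    (vertexSet (Pab.P a b)).ncard = (a + 2 * b - 1) + 3 ∧
    HasIsolatedStructure (Pab.P a b) a b
      (Pab.v a b) (Pab.y a b) (Pab.z a b) (Pab.t a b) (Pab.u a b) := by
  have hvy := Pab.sum_v_add_sum_y ha hb
  have hyz := Pab.sum_y_add_z ha hb
  have hzt := Pab.z_add_t a b
  rw [← Nat.cast_smul_eq_nsmul ℝ, Nat.cast_sub (by omega), Nat.cast_add, Nat.cast_one] at hvy
  refine ⟨Pab.isSmoothFano_P ha hb, ?_, ?_, fun A => ?_, hvy, hyz, hzt, ?_, ?_⟩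
  · rw [Pab.vertexSet_P ha hb, Set.ncard_range_of_injective (Pab.vertex_injective ha hb),
      Nat.card_eq_fintype_card, Pab.card_label ha]
  · rw [Pab.vertexSet_P ha hb, Pab.range_vertex]
  · rw [Pab.isPrimitiveCollection_P_iff ha hb]
    simp only [Pab.vertex_image_consecutive]
    simp [Fin.exists_fin_succ]
  · rw [← hyz, add_left_comm, add_comm (Pab.t a b), hzt, add_zero]
  · rw [← hyz, show (a : ℝ) + b - 2 = (a + b - 1) - 1 by ring, sub_smul, ← hvy, one_smul,
      ← neg_eq_of_add_eq_zero_left hzt]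
    abel
end
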